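/- Fix n ∈ ℕ. Suppose θ is bounded, i.e. sup_{P∈P} |θ(P)| < ∞ (Condition A); the loss l : [0,∞) → [0,∞) is nondecreasing with l(0) = 0 and l(3t/2) ≤ a·l(t) for all t ≥ 0, for some a ∈ (1,∞) (Condition B); P is dominated by a σ-finite measure and convex; θ : P → ℝ is linear; and Q is a non-interactive channel from X^n to Z^n with identical marginals Q1. Fix C ≥ √(2 log(2a)) + 1 and set C1 = [1 + 8a²/(2a−1)] · a^{⌈2 log(C)/log(3/2)⌉}. Then there exists a measurable estimator θ̂_n : Z^n → ℝ such that sup_{P∈P} ∫ l(|θ̂_n(z) − θ(P)|) d(Q P^⊗n)(z) ≤ C1 · l( ω_H^{(Q1)}(n^{−1/2}) ). -/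

import Mathlib

open MeasureTheory ProbabilityTheory ENNReal

namespace PrivacyPaper

variable {X Z Ω : Type*} [MeasurableSpace X] [MeasurableSpace Z] [MeasurableSpace Ω]

/-- Total variation distance between two measures:
`d_TV(P0, P1) = sup_{A measurable} |P0(A) - P1(A)|`. -/
noncomputable def dTV (P0 P1 : Measure Ω) : ℝ :=
  ⨆ A : {A : Set Ω // MeasurableSet A}, |(P0 A.1).toReal - (P1 A.1).toReal|

/-- Hellinger distance between two measures, computed via densities with respect to the
dominating measure `P0 + P1`. -/
noncomputable def dH (P0 P1 : Measure Ω) : ℝ :=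
  Real.sqrt (∫ ω, (Real.sqrt ((P0.rnDeriv (P0 + P1) ω).toReal) -
    Real.sqrt ((P1.rnDeriv (P0 + P1) ω).toReal)) ^ 2 ∂(P0 + P1))

/-- Hellinger affinity `ρ(P0, P1) = ∫ √(p0 p1) dμ`, with `μ = P0 + P1`. -/
noncomputable def hellingerAffinity (P0 P1 : Measure Ω) : ℝ :=
  ∫ ω, Real.sqrt ((P0.rnDeriv (P0 + P1) ω).toReal * (P1.rnDeriv (P0 + P1) ω).toReal)
    ∂(P0 + P1)

/-- Modulus of continuity of a functional `θ` over `P` with respect to a distance `d`,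
with values in `ℝ≥0∞`. -/
noncomputable def modulus (d : Measure X → Measure X → ℝ) (P : Set (Measure X))
    (θ : Measure X → ℝ) (ε : ℝ) : ℝ≥0∞ :=
  ⨆ (P0 : Measure X) (_ : P0 ∈ P) (P1 : Measure X) (_ : P1 ∈ P) (_ : d P0 P1 ≤ ε),
    ENNReal.ofReal |θ P0 - θ P1|

/-- Total variation modulus of continuity `ω_TV`. -/
noncomputable def omegaTV (P : Set (Measure X)) (θ : Measure X → ℝ) : ℝ → ℝ≥0∞ :=
  modulus dTV P θ

/-- Hellinger modulus of continuity `ω_H`. -/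
noncomputable def omegaH (P : Set (Measure X)) (θ : Measure X → ℝ) : ℝ → ℝ≥0∞ :=
  modulus dH P θ

/-- Push-forward of a measure through a channel `c` (given as a map into measures):
`(c P)(A) = ∫ c(A|x) dP(x)`. -/
noncomputable def push (c : X → Measure Z) (μ : Measure X) : Measure Z := μ.bind c

/-- Privatized Hellinger modulus `ω_H^{(Q1)}`. -/
noncomputable def omegaHQ (c : X → Measure Z) (P : Set (Measure X)) (θ : Measure X → ℝ) :
    ℝ → ℝ≥0∞ :=
  modulus (fun P0 P1 => dH (push c P0) (push c P1)) P θ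

/-- Left limit at `m ∈ ℝ≥0∞` of a nondecreasing `ℝ≥0∞`-valued function on `[0,∞)`:
`f(m⁻) = sup_{0 ≤ y < m} f(y)`. -/
noncomputable def leftLimE (f : ℝ → ℝ≥0∞) (m : ℝ≥0∞) : ℝ≥0∞ :=
  ⨆ (y : ℝ) (_ : 0 ≤ y) (_ : ENNReal.ofReal y < m), f y

/-- Right limit at `x ∈ ℝ` of a nondecreasing `ℝ≥0∞`-valued function:
`f(x⁺) = inf_{y > x} f(y)`. -/
noncomputable def rightLimE (f : ℝ → ℝ≥0∞) (x : ℝ) : ℝ≥0∞ :=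
  ⨅ (y : ℝ) (_ : x < y), f y

/-- Left limit of a nondecreasing loss function at `m ∈ ℝ≥0∞`, with the convention
`l(0⁻) = l(0)`, as an element of `ℝ≥0∞`. -/
noncomputable def lossLeftLim (l : ℝ → ℝ) (m : ℝ≥0∞) : ℝ≥0∞ :=
  if m = 0 then ENNReal.ofReal (l 0)
  else ⨆ (y : ℝ) (_ : 0 ≤ y) (_ : ENNReal.ofReal y < m), ENNReal.ofReal (l y)

/-- A (randomized) test is a measurable function with values in `[0,1]`. -/
def IsTest (φ : Ω → ℝ) : Prop := Measurable φ ∧ ∀ ω, 0 ≤ φ ω ∧ φ ω ≤ 1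

/-- Risk of a test: `∫ φ dμ0 + ∫ (1 - φ) dμ1`. -/
noncomputable def testRisk (μ0 μ1 : Measure Ω) (φ : Ω → ℝ) : ℝ :=
  (∫ ω, φ ω ∂μ0) + ∫ ω, (1 - φ ω) ∂μ1

/-- Testing affinity of a pair of measures: `π(μ0, μ1) = inf_φ (∫ φ dμ0 + ∫ (1-φ) dμ1)`. -/
noncomputable def pairAffinity (μ0 μ1 : Measure Ω) : ℝ :=
  sInf {r : ℝ | ∃ φ : Ω → ℝ, IsTest φ ∧ r = testRisk μ0 μ1 φ}

/-- Testing affinity of two sets of measures: `π(M0, M1) = sup π(μ0, μ1)`. -/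
noncomputable def setAffinity (M0 M1 : Set (Measure Ω)) : ℝ :=
  sSup {r : ℝ | ∃ μ0 ∈ M0, ∃ μ1 ∈ M1, r = pairAffinity μ0 μ1}

/-- The set of finite convex combinations of elements of `M`. -/
def convComb (M : Set (Measure Ω)) : Set (Measure Ω) :=
  {μ | ∃ (m : ℕ) (w : Fin m → ℝ≥0∞) (ν : Fin m → Measure Ω),
    (∑ i, w i) = 1 ∧ (∀ i, ν i ∈ M) ∧ μ = ∑ i, w i • ν i}

/-- The upper affinity `η_A^{(n)}(Q, Δ)`, for the channel described through the map
`QPn : P ↦ Q P^{⊗n}`. -/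
noncomputable def etaA {Zn : Type*} [MeasurableSpace Zn] (QPn : Measure X → Measure Zn)
    (P : Set (Measure X)) (θ : Measure X → ℝ) (Δ : ℝ) : ℝ :=
  ⨆ t : ℝ, setAffinity (convComb (QPn '' {μ | μ ∈ P ∧ θ μ ≤ t}))
    (convComb (QPn '' {μ | μ ∈ P ∧ t + Δ ≤ θ μ}))

/-- The affinity `η_2^{(n)}(Q, Δ)` (no convex hulls). -/
noncomputable def eta2 {Zn : Type*} [MeasurableSpace Zn] (QPn : Measure X → Measure Zn)
    (P : Set (Measure X)) (θ : Measure X → ℝ) (Δ : ℝ) : ℝ :=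
  ⨆ t : ℝ, setAffinity (QPn '' {μ | μ ∈ P ∧ θ μ ≤ t}) (QPn '' {μ | μ ∈ P ∧ t + Δ ≤ θ μ})

/-- `Δ_A^{(n)}(Q, η) = sup {Δ ≥ 0 : η_A^{(n)}(Q, Δ) > η}`, as an element of `ℝ≥0∞`. -/
noncomputable def DeltaA {Zn : Type*} [MeasurableSpace Zn] (QPn : Measure X → Measure Zn)
    (P : Set (Measure X)) (θ : Measure X → ℝ) (η : ℝ) : ℝ≥0∞ :=
  ⨆ (Δ : ℝ) (_ : 0 ≤ Δ) (_ : η < etaA QPn P θ Δ), ENNReal.ofReal Δ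

/-- `Δ_2^{(n)}(Q, η) = sup {Δ ≥ 0 : η_2^{(n)}(Q, Δ) > η}`, as an element of `ℝ≥0∞`. -/
noncomputable def Delta2 {Zn : Type*} [MeasurableSpace Zn] (QPn : Measure X → Measure Zn)
    (P : Set (Measure X)) (θ : Measure X → ℝ) (η : ℝ) : ℝ≥0∞ :=
  ⨆ (Δ : ℝ) (_ : 0 ≤ Δ) (_ : η < eta2 QPn P θ Δ), ENNReal.ofReal Δ

/-- The privatized distribution `Q P^{⊗n}` of the observation vector. -/
noncomputable def privProd {Zn : Type*} [MeasurableSpace Zn] (n : ℕ)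
    (Q : (Fin n → X) → Measure Zn) (μ : Measure X) : Measure Zn :=
  (Measure.pi fun _ : Fin n => μ).bind Q

/-- The `Q`-privatized minimax risk `M_n(Q, P, θ)` (with values in `ℝ≥0∞`), where the channel
is described through the map `QPn : P ↦ Q P^{⊗n}`. -/
noncomputable def minimaxRisk {Zn : Type*} [MeasurableSpace Zn] (l : ℝ → ℝ)
    (QPn : Measure X → Measure Zn) (P : Set (Measure X)) (θ : Measure X → ℝ) : ℝ≥0∞ :=
  ⨅ (est : Zn → ℝ) (_ : Measurable est), ⨆ (μ : Measure X) (_ : μ ∈ P),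
    ∫⁻ z, ENNReal.ofReal (l |est z - θ μ|) ∂(QPn μ)

/-- Iterated sequential integral: `seqIntegral K n x g` is
`∫ ⋯ ∫ g(z_1,…,z_n) K_{n-1}(dz_n | x_n, z_{1:n-1}) ⋯ K_0(dz_1 | x_1)`. -/
noncomputable def seqIntegral (K : (i : ℕ) → X × (Fin i → Z) → Measure Z) :
    (n : ℕ) → (Fin n → X) → ((Fin n → Z) → ℝ≥0∞) → ℝ≥0∞
  | 0, _, g => g fun i => i.elim0
  | n + 1, x, g => seqIntegral K n (fun i => x i.castSucc)
      fun zpre => ∫⁻ zn, g (Fin.snoc zpre zn) ∂(K n (x (Fin.last n), zpre))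

/-- An `α`-sequentially interactive channel: `Q` is obtained by sequential composition of
Markov kernels `K i : X × Z^i → Z`, each of which satisfies the `α`-differential privacy
ratio bound in its `X`-argument. -/
def IsSeqInteractive (n : ℕ) (α : ℝ) (Q : Kernel (Fin n → X) (Fin n → Z)) : Prop :=
  ∃ K : (i : ℕ) → Kernel (X × (Fin i → Z)) Z,
    (∀ i, IsMarkovKernel (K i)) ∧
    (∀ (i : ℕ) (x x' : X) (zpre : Fin i → Z) (A : Set Z), MeasurableSet A →
      K i (x, zpre) A ≤ ENNReal.ofReal (Real.exp α) * K i (x', zpre) A) ∧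
    (∀ (x : Fin n → X) (A : Set (Fin n → Z)), MeasurableSet A →
      Q x A = seqIntegral (fun i p => K i p) n x (A.indicator fun _ => 1))

/-- The `α`-private minimax risk `M_{n,α}(P, θ)`: infimum over all output dimensions
`q ∈ ℕ` and all `α`-sequentially interactive channels from `X^n` to `(ℝ^q)^n`. -/
noncomputable def privMinimaxRisk (n : ℕ) (α : ℝ) (l : ℝ → ℝ) (P : Set (Measure X))
    (θ : Measure X → ℝ) : ℝ≥0∞ :=
  ⨅ (q : ℕ) (Q : Kernel (Fin n → X) (Fin n → (Fin q → ℝ))) (_ : IsMarkovKernel Q)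
    (_ : IsSeqInteractive n α Q),
      minimaxRisk l (privProd n fun x => Q x) P θ

/-- The mixture `λ P0 + (1-λ) P1` of two measures. -/
noncomputable def mix (lam : ℝ) (P0 P1 : Measure Ω) : Measure Ω :=
  ENNReal.ofReal lam • P0 + ENNReal.ofReal (1 - lam) • P1

/-- Convexity of a set of measures. -/
def ConvexMeasureSet (P : Set (Measure Ω)) : Prop :=
  ∀ P0 ∈ P, ∀ P1 ∈ P, ∀ lam : ℝ, 0 ≤ lam → lam ≤ 1 → mix lam P0 P1 ∈ P

/-- Linearity of a functional on a (convex) set of measures. -/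
def LinearFunctional (P : Set (Measure X)) (θ : Measure X → ℝ) : Prop :=
  ∀ P0 ∈ P, ∀ P1 ∈ P, ∀ lam : ℝ, 0 ≤ lam → lam ≤ 1 →
    θ (mix lam P0 P1) = lam * θ P0 + (1 - lam) * θ P1

/-- A family of measures is dominated if all its members are absolutely continuous with
respect to a single σ-finite measure. -/
def Dominated (M : Set (Measure Ω)) : Prop :=
  ∃ ν : Measure Ω, SigmaFinite ν ∧ ∀ μ ∈ M, μ ≪ ν

/-- Condition (A): the functional `θ` is bounded on `P`. -/
def CondA (P : Set (Measure X)) (θ : Measure X → ℝ) : Prop := ∃ c : ℝ, ∀ μ ∈ P, |θ μ| ≤ c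

/-- Condition (B): the loss `l : [0,∞) → [0,∞)` is nondecreasing, `l 0 = 0` and
`l(3t/2) ≤ a l(t)` for all `t ≥ 0`. -/
def CondB (l : ℝ → ℝ) (a : ℝ) : Prop :=
  (∀ u v : ℝ, 0 ≤ u → u ≤ v → l u ≤ l v) ∧ (∀ u : ℝ, 0 ≤ u → 0 ≤ l u) ∧ l 0 = 0 ∧
    ∀ u : ℝ, 0 ≤ u → l (3 / 2 * u) ≤ a * l u

/-- Sup-norm of a (bounded) function. -/
noncomputable def supNorm (f : X → ℝ) : ℝ := ⨆ x, |f x|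

/-- The binary privatization channel `Q_1^{(α,ℓ)}`, supported on `{-z0, z0}` with
`z0 = ‖ℓ‖_∞ (e^α + 1)/(e^α - 1)`, giving the point `z0` probability `(1 + ℓ(x)/z0)/2`. -/
noncomputable def binChannel (α : ℝ) (ℓ : X → ℝ) (x : X) : Measure ℝ :=
  ENNReal.ofReal ((1 + ℓ x / (supNorm ℓ * ((Real.exp α + 1) / (Real.exp α - 1)))) / 2) •
      Measure.dirac (supNorm ℓ * ((Real.exp α + 1) / (Real.exp α - 1))) +
    ENNReal.ofReal ((1 - ℓ x / (supNorm ℓ * ((Real.exp α + 1) / (Real.exp α - 1)))) / 2) •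
      Measure.dirac (-(supNorm ℓ * ((Real.exp α + 1) / (Real.exp α - 1))))

/-- `g_d(Q, η) = inf { d(P0, P1) : π(Q P0^{⊗n}, Q P1^{⊗n}) ≤ η }`, as an element of `ℝ≥0∞`
(with `inf ∅ = ∞`). -/
noncomputable def gDist {Zn : Type*} [MeasurableSpace Zn] (d : Measure X → Measure X → ℝ)
    (QPn : Measure X → Measure Zn) (P : Set (Measure X)) (η : ℝ) : ℝ≥0∞ :=
  ⨅ (P0 : Measure X) (_ : P0 ∈ P) (P1 : Measure X) (_ : P1 ∈ P)
    (_ : pairAffinity (QPn P0) (QPn P1) ≤ η), ENNReal.ofReal (d P0 P1)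

/-- Integral of a bounded measurable function against a finite signed measure, via the
Jordan decomposition. -/
noncomputable def sInt (φ : Ω → ℝ) (σ : MeasureTheory.SignedMeasure Ω) : ℝ :=
  (∫ ω, φ ω ∂σ.toJordanDecomposition.posPart) - ∫ ω, φ ω ∂σ.toJordanDecomposition.negPart

/-- Membership in the set `𝕋 = {φ ∈ L∞(μ) : a ≤ ∫ φ f dμ ≤ b  ∀ f ∈ L1(μ), ‖f‖_{L1} ≤ 1}`. -/
def memT (μ : Measure Ω) (a b : ℝ) (φ : Ω → ℝ) : Prop :=
  Measurable φ ∧ (∃ c : ℝ, ∀ᵐ ω ∂μ, |φ ω| ≤ c) ∧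
    ∀ f : Ω → ℝ, Integrable f μ → (∫ ω, |f ω| ∂μ) ≤ 1 →
      a ≤ (∫ ω, φ ω * f ω ∂μ) ∧ (∫ ω, φ ω * f ω ∂μ) ≤ b

/-- The function `G(s,t) = log((1-s)/(1-t)) / log((t/s)·(1-s)/(1-t))`, with `G(s,s) = s`. -/
noncomputable def Gfun (s t : ℝ) : ℝ :=
  if s = t then s
  else Real.log ((1 - s) / (1 - t)) / Real.log (t / s * ((1 - s) / (1 - t)))

/-!
Let `ω` be the privatized modulus at `n ^ (-1/2)`. By convexity of `P`, linearity of `θ` and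
concavity of the Hellinger affinity, the modulus grows at most quadratically: if
`|θ P₀ - θ P₁| ≥ τ ω` with `τ > 1`, then the squared Hellinger distance of the privatized measures
is at least `τ / n`. The half-families `{θ ≤ s}` and `{θ ≥ s + τ ω}` are convex and have affinity at
most `1 - τ / (2 n)`. Following Le Cam and Birgé, the square root `g` of the likelihood ratio of a
least favourable pair of mixtures satisfies `∫ g dμ ≤ ρ` and `∫ g⁻¹ dη ≤ ρ` throughout the two
families, `ρ` being any bound on the affinity. These bounds tensorize, so thresholding the product
of the `g (z i)` at `1` separates the two families of `n`-fold products with errors of order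
`exp (-τ / 2)`. A least favourable pair exists for finite subfamilies; the general case follows by
weak compactness in `L²`, in the form that closed convex sets whose finite intersections all meet a
fixed ball have a common point.

Finally, cut the range of `θ` into cells of length `C² ω / 2` and compare all pairs of cells by such
tests. The estimator is the centre of the cell whose farthest lost comparison is nearest. It misses
the true cell by `r ≥ 2` cells only if a cell at distance at least `r` beats the true one, and these
error probabilities decay geometrically fast enough to beat the growth of the loss.
-/

section Hilbert

variable {H : Type*} [NormedAddCommGroup H] [InnerProductSpace ℝ H] [CompleteSpace H]

lemma exists_norm_sq_add_norm_sub_sq_le_of_convex {K : Set H} (hne : K.Nonempty)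
    (hclosed : IsClosed K) (hconv : Convex ℝ K) :
    ∃ x ∈ K, ∀ y ∈ K, ‖x‖ ^ 2 + ‖y - x‖ ^ 2 ≤ ‖y‖ ^ 2 := by
  obtain ⟨x, hx, hmin⟩ :=
    exists_norm_eq_iInf_of_complete_convex hne hclosed.isComplete hconv 0
  rw [norm_eq_iInf_iff_real_inner_le_zero hconv hx] at hmin
  refine ⟨x, hx, fun y hy => ?_⟩
  have hobtuse : 0 ≤ inner ℝ x (y - x) := by simpa [inner_neg_left] using hmin y hy
  calc ‖x‖ ^ 2 + ‖y - x‖ ^ 2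
      ≤ ‖x‖ ^ 2 + 2 * inner ℝ x (y - x) + ‖y - x‖ ^ 2 := by linarith
    _ = ‖y‖ ^ 2 := by rw [← norm_add_sq_real, add_sub_cancel]

lemma cauchySeq_of_norm_sub_sq_le {ι E : Type*} [SemilatticeSup ι] [Nonempty ι]
    [SeminormedAddCommGroup E] {x : ι → E} {f : ι → ℝ} (hf : BddAbove (Set.range f))
    (h : ∀ i j, i ≤ j → ‖x j - x i‖ ^ 2 ≤ f j - f i) : CauchySeq x := by
  rw [Metric.cauchySeq_iff']
  intro ε hε
  obtain ⟨i, hi⟩ := exists_lt_of_lt_ciSup (sub_lt_self (⨆ i, f i) (pow_pos hε 2))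
  refine ⟨i, fun j hij => ?_⟩
  rw [dist_eq_norm]
  refine lt_of_pow_lt_pow_left₀ 2 hε.le ?_
  linarith [h i j hij, le_ciSup hf j]

theorem nonempty_iInter_of_closed_convex_of_finite {ι : Type*} {K : ι → Set H}
    (hclosed : ∀ i, IsClosed (K i)) (hconv : ∀ i, Convex ℝ (K i)) (R : ℝ)
    (hfin : ∀ F : Finset ι, ∃ x ∈ ⋂ i ∈ F, K i, ‖x‖ ≤ R) : (⋂ i, K i).Nonempty := by
  classical
  -- The points of minimal norm of the finite intersections form a Cauchy net, because their norms
  -- increase along it and are bounded.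
  choose x hxK hxmin using fun F : Finset ι => exists_norm_sq_add_norm_sub_sq_le_of_convex
    (let ⟨x, hx, _⟩ := hfin F; ⟨x, hx⟩) (isClosed_biInter fun i _ => hclosed i)
    (convex_iInter₂ fun i (_ : i ∈ F) => hconv i)
  have hbdd : BddAbove (Set.range fun F => ‖x F‖ ^ 2) := by
    refine ⟨R ^ 2, Set.forall_mem_range.2 fun F => ?_⟩
    obtain ⟨y, hyK, hyR⟩ := hfin F
    have hyR2 : ‖y‖ ^ 2 ≤ R ^ 2 := by gcongr
    have hmin := hxmin F y hyK
    linarith [sq_nonneg ‖y - x F‖]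
  have hcauchy : CauchySeq x := by
    refine cauchySeq_of_norm_sub_sq_le hbdd fun F G hFG => ?_
    have hxG : x G ∈ ⋂ i ∈ F, K i := Set.biInter_subset_biInter_left hFG (hxK G)
    have hmin := hxmin F (x G) hxG
    linarith
  obtain ⟨y, hy⟩ := cauchySeq_tendsto_of_complete hcauchy
  refine ⟨y, Set.mem_iInter.2 fun i => (hclosed i).mem_of_tendsto hy ?_⟩
  filter_upwards [Filter.eventually_ge_atTop {i}] with F hF
  exact Set.mem_iInter₂.1 (hxK F) i (hF (Finset.mem_singleton_self i))

end Hilbert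

section Product

variable {ι : Type*} [Fintype ι] {α : ι → Type*} [∀ i, MeasurableSpace (α i)]

lemma lintegral_pi_prod_eq_prod_lintegral (μ : ∀ i, Measure (α i))
    [∀ i, IsProbabilityMeasure (μ i)] {f : ∀ i, α i → ℝ≥0∞} (hf : ∀ i, Measurable (f i)) :
    ∫⁻ z, ∏ i, f i (z i) ∂(Measure.pi μ) = ∏ i, ∫⁻ x, f i x ∂(μ i) := by
  rw [lintegral_prod_eq_prod_lintegral_of_indepFun Finset.univ
    (fun i (z : ∀ i, α i) => f i (z i))
    (iIndepFun_pi fun i => (hf i).aemeasurable)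
    (fun i => (hf i).comp (measurable_pi_apply i))]
  exact Finset.prod_congr rfl fun i _ =>
    (measurePreserving_eval μ i).lintegral_comp (hf i)

lemma absolutelyContinuous_pi {μ ν : ∀ i, Measure (α i)} [∀ i, IsProbabilityMeasure (μ i)]
    [∀ i, IsProbabilityMeasure (ν i)] (h : ∀ i, μ i ≪ ν i) :
    Measure.pi μ ≪ Measure.pi ν := by
  have hdensity : Measure.pi μ =
      (Measure.pi ν).withDensity fun z => ∏ i, (μ i).rnDeriv (ν i) (z i) := by
    refine Measure.pi_eq fun s hs => ?_
    have hind (z : ∀ i, α i) :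
        (Set.univ.pi s).indicator (fun z => ∏ i, (μ i).rnDeriv (ν i) (z i)) z =
          ∏ i, (s i).indicator ((μ i).rnDeriv (ν i)) (z i) := by
      classical
      simp only [Set.indicator_apply, Finset.prod_ite_zero, Set.mem_univ_pi, Finset.mem_univ,
        forall_const]
    rw [withDensity_apply _ (MeasurableSet.univ_pi hs),
      ← lintegral_indicator (MeasurableSet.univ_pi hs), lintegral_congr hind,
      lintegral_pi_prod_eq_prod_lintegral ν
        fun i => (Measure.measurable_rnDeriv (μ i) (ν i)).indicator (hs i)]
    exact Finset.prod_congr rfl fun i _ => by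
      rw [lintegral_indicator (hs i), Measure.setLIntegral_rnDeriv (h i)]
  exact hdensity ▸ withDensity_absolutelyContinuous _ _

lemma measure_pi_one_le_prod_le {Z : Type*} [MeasurableSpace Z] (μ : Measure Z)
    [IsProbabilityMeasure μ] {f : Z → ℝ≥0∞} (hf : Measurable f) :
    Measure.pi (fun _ : ι => μ) {z | 1 ≤ ∏ i, f (z i)} ≤
      (∫⁻ z, f z ∂μ) ^ Fintype.card ι :=
  calc Measure.pi (fun _ : ι => μ) {z | 1 ≤ ∏ i, f (z i)}
      ≤ ∫⁻ z, ∏ i, f (z i) ∂(Measure.pi fun _ : ι => μ) := by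
        simpa using mul_meas_ge_le_lintegral (μ := Measure.pi fun _ : ι => μ)
          (f := fun z => ∏ i, f (z i)) (by fun_prop) 1
    _ = (∫⁻ z, f z ∂μ) ^ Fintype.card ι := by
        rw [lintegral_pi_prod_eq_prod_lintegral _ fun _ => hf, Finset.prod_const,
          Finset.card_univ]

end Product

section Hellinger

lemma sqrt_mul_le_abs_add_abs (s t : ℝ) : √(s * t) ≤ |s| + |t| := by
  refine Real.sqrt_le_iff.2 ⟨by positivity, ?_⟩
  calc s * t ≤ |s| * |t| := (le_abs_self _).trans_eq (abs_mul s t)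
    _ ≤ (|s| + |t|) ^ 2 := by nlinarith [abs_nonneg s, abs_nonneg t]

lemma integrable_sqrt_mul {ν : Measure Ω} {f g : Ω → ℝ} (hf : Integrable f ν)
    (hg : Integrable g ν) : Integrable (fun z => √(f z * g z)) ν := by
  refine (hf.abs.add hg.abs).mono'
    (Real.continuous_sqrt.comp_aestronglyMeasurable (hf.1.mul hg.1)) (.of_forall fun z => ?_)
  rw [Real.norm_of_nonneg (Real.sqrt_nonneg _)]
  exact sqrt_mul_le_abs_add_abs _ _

lemma integrable_sqrt_toReal_rnDeriv_mul (μ η ν : Measure Ω) [IsFiniteMeasure μ]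
    [IsFiniteMeasure η] :
    Integrable (fun z => √((μ.rnDeriv ν z).toReal * (η.rnDeriv ν z).toReal)) ν :=
  integrable_sqrt_mul Measure.integrable_toReal_rnDeriv Measure.integrable_toReal_rnDeriv

theorem hellingerAffinity_eq_integral {μ η ν : Measure Ω} [IsFiniteMeasure μ]
    [IsFiniteMeasure η] [SigmaFinite ν] (hμ : μ ≪ ν) (hη : η ≪ ν) :
    hellingerAffinity μ η = ∫ z, √((μ.rnDeriv ν z).toReal * (η.rnDeriv ν z).toReal) ∂ν := by
  have hsum : μ + η ≪ ν := hμ.add_left hη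
  rw [hellingerAffinity, ← integral_toReal_rnDeriv_mul hsum]
  refine integral_congr_ae ?_
  have hμ_sum : μ ≪ μ + η := Measure.AbsolutelyContinuous.rfl.add_right η
  have hη_sum : η ≪ μ + η := Measure.AbsolutelyContinuous.rfl.add_right' μ
  filter_upwards [Measure.rnDeriv_mul_rnDeriv (κ := ν) hμ_sum,
    Measure.rnDeriv_mul_rnDeriv (κ := ν) hη_sum] with z hμz hηz
  rw [← hμz, ← hηz]
  simp only [Pi.mul_apply, ENNReal.toReal_mul]
  rw [mul_mul_mul_comm, Real.sqrt_mul (mul_nonneg toReal_nonneg toReal_nonneg),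
    Real.sqrt_mul_self toReal_nonneg, mul_comm]

theorem dH_sq (μ η : Measure Ω) [IsProbabilityMeasure μ] [IsProbabilityMeasure η] :
    dH μ η ^ 2 = 2 - 2 * hellingerAffinity μ η := by
  have hμ : ∫ z, (μ.rnDeriv (μ + η) z).toReal ∂(μ + η) = 1 := by
    rw [Measure.integral_toReal_rnDeriv (Measure.AbsolutelyContinuous.rfl.add_right η),
      probReal_univ]
  have hη : ∫ z, (η.rnDeriv (μ + η) z).toReal ∂(μ + η) = 1 := by
    rw [Measure.integral_toReal_rnDeriv (Measure.AbsolutelyContinuous.rfl.add_right' μ),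
      probReal_univ]
  have hexpand (s t : ℝ≥0∞) :
      (√s.toReal - √t.toReal) ^ 2 = s.toReal + t.toReal - 2 * √(s.toReal * t.toReal) := by
    rw [sub_sq, Real.sq_sqrt toReal_nonneg, Real.sq_sqrt toReal_nonneg,
      Real.sqrt_mul toReal_nonneg]
    ring
  rw [dH, Real.sq_sqrt (integral_nonneg fun _ => sq_nonneg _)]
  simp only [hexpand]
  rw [integral_sub (by fun_prop) ((integrable_sqrt_toReal_rnDeriv_mul _ _ _).const_mul 2),
    integral_add (by fun_prop) (by fun_prop), hμ, hη, integral_const_mul, hellingerAffinity]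
  norm_num

lemma dH_self (μ : Measure Ω) : dH μ μ = 0 := by
  simp [dH]

instance isFiniteMeasure_mix (lam : ℝ) (μ η : Measure Ω) [IsFiniteMeasure μ]
    [IsFiniteMeasure η] : IsFiniteMeasure (mix lam μ η) :=
  haveI := Measure.smul_finite μ (ENNReal.ofReal_ne_top (r := lam))
  haveI := Measure.smul_finite η (ENNReal.ofReal_ne_top (r := 1 - lam))
  inferInstanceAs (IsFiniteMeasure (_ + _))

lemma isProbabilityMeasure_mix {lam : ℝ} (h0 : 0 ≤ lam) (h1 : lam ≤ 1) (μ η : Measure Ω)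
    [IsProbabilityMeasure μ] [IsProbabilityMeasure η] : IsProbabilityMeasure (mix lam μ η) := by
  constructor
  simp only [mix, Measure.add_apply, Measure.smul_apply, measure_univ, smul_eq_mul, mul_one]
  rw [← ENNReal.ofReal_add h0 (sub_nonneg.2 h1), add_sub_cancel, ENNReal.ofReal_one]

lemma toReal_rnDeriv_mix {lam : ℝ} (h0 : 0 ≤ lam) (h1 : lam ≤ 1) (μ η ν : Measure Ω)
    [IsFiniteMeasure μ] [IsFiniteMeasure η] [SigmaFinite ν] :
    (fun z => ((mix lam μ η).rnDeriv ν z).toReal) =ᵐ[ν]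
      fun z => lam * (μ.rnDeriv ν z).toReal + (1 - lam) * (η.rnDeriv ν z).toReal := by
  have := Measure.smul_finite μ (ENNReal.ofReal_ne_top (r := lam))
  have := Measure.smul_finite η (ENNReal.ofReal_ne_top (r := 1 - lam))
  filter_upwards [Measure.rnDeriv_add (ENNReal.ofReal lam • μ) (ENNReal.ofReal (1 - lam) • η) ν,
    Measure.rnDeriv_smul_left_of_ne_top μ ν (ENNReal.ofReal_ne_top (r := lam)),
    Measure.rnDeriv_smul_left_of_ne_top η ν (ENNReal.ofReal_ne_top (r := 1 - lam)),
    μ.rnDeriv_ne_top ν, η.rnDeriv_ne_top ν] with z hadd hμ hη hμtop hηtop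
  rw [mix, hadd, Pi.add_apply, hμ, hη, Pi.smul_apply, Pi.smul_apply, smul_eq_mul, smul_eq_mul,
    ENNReal.toReal_add (by finiteness) (by finiteness), ENNReal.toReal_mul, ENNReal.toReal_mul,
    ENNReal.toReal_ofReal h0, ENNReal.toReal_ofReal (sub_nonneg.2 h1)]

lemma hellingerAffinity_mix_ge {lam : ℝ} (h0 : 0 ≤ lam) (h1 : lam ≤ 1) (μ η₀ η₁ : Measure Ω)
    [IsFiniteMeasure μ] [IsFiniteMeasure η₀] [IsFiniteMeasure η₁] :
    lam * hellingerAffinity μ η₀ + (1 - lam) * hellingerAffinity μ η₁ ≤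
      hellingerAffinity μ (mix lam η₀ η₁) := by
  obtain ⟨ν, hν⟩ : ∃ ν, ν = μ + η₀ + η₁ := ⟨_, rfl⟩
  have : IsFiniteMeasure ν := hν ▸ inferInstance
  obtain ⟨hμη₀, hη₁⟩ := Measure.AbsolutelyContinuous.add_left_iff.1 hν.symm.absolutelyContinuous
  obtain ⟨hμ, hη₀⟩ := Measure.AbsolutelyContinuous.add_left_iff.1 hμη₀
  have hmix : mix lam η₀ η₁ ≪ ν :=
    (hη₀.smul_left _).add_left (hη₁.smul_left _)
  rw [hellingerAffinity_eq_integral hμ hη₀, hellingerAffinity_eq_integral hμ hη₁,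
    hellingerAffinity_eq_integral hμ hmix, ← integral_const_mul, ← integral_const_mul,
    ← integral_add ((integrable_sqrt_toReal_rnDeriv_mul _ _ _).const_mul _)
      ((integrable_sqrt_toReal_rnDeriv_mul _ _ _).const_mul _)]
  refine integral_mono_ae (((integrable_sqrt_toReal_rnDeriv_mul _ _ _).const_mul _).add
      ((integrable_sqrt_toReal_rnDeriv_mul _ _ _).const_mul _))
    (integrable_sqrt_toReal_rnDeriv_mul _ _ _) ?_
  filter_upwards [toReal_rnDeriv_mix h0 h1 η₀ η₁ ν] with z hz
  have hconcave := Real.strictConcaveOn_sqrt.concaveOn.2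
    (Set.mem_Ici.2 (mul_nonneg toReal_nonneg toReal_nonneg) :
      (μ.rnDeriv ν z).toReal * (η₀.rnDeriv ν z).toReal ∈ Set.Ici 0)
    (Set.mem_Ici.2 (mul_nonneg toReal_nonneg toReal_nonneg) :
      (μ.rnDeriv ν z).toReal * (η₁.rnDeriv ν z).toReal ∈ Set.Ici 0)
    h0 (sub_nonneg.2 h1) (add_sub_cancel _ _)
  simp only [smul_eq_mul] at hconcave
  rw [hz]
  convert hconcave using 2
  ring

theorem dH_sq_mix_le {lam : ℝ} (h0 : 0 ≤ lam) (h1 : lam ≤ 1) (μ η₀ η₁ : Measure Ω)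
    [IsProbabilityMeasure μ] [IsProbabilityMeasure η₀] [IsProbabilityMeasure η₁] :
    dH μ (mix lam η₀ η₁) ^ 2 ≤ lam * dH μ η₀ ^ 2 + (1 - lam) * dH μ η₁ ^ 2 := by
  have := isProbabilityMeasure_mix h0 h1 η₀ η₁
  rw [dH_sq, dH_sq, dH_sq]
  linarith [hellingerAffinity_mix_ge h0 h1 μ η₀ η₁]

end Hellinger

section Variation

lemma lintegral_le_of_tendsto {μ : Measure Ω} {ι : Type*} {u : Filter ι} [u.NeBot]
    [u.IsCountablyGenerated] {f : ι → Ω → ℝ≥0∞} {F : Ω → ℝ≥0∞} {c : ι → ℝ≥0∞} {C : ℝ≥0∞}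
    (hf : ∀ i, AEMeasurable (f i) μ)
    (hlim : ∀ᵐ z ∂μ, Filter.Tendsto (fun i => f i z) u (nhds (F z)))
    (hle : ∀ᶠ i in u, ∫⁻ z, f i z ∂μ ≤ c i) (hc : Filter.Tendsto c u (nhds C)) :
    ∫⁻ z, F z ∂μ ≤ C :=
  calc ∫⁻ z, F z ∂μ = ∫⁻ z, Filter.liminf (fun i => f i z) u ∂μ :=
        lintegral_congr_ae (hlim.mono fun _ hz => hz.liminf_eq.symm)
    _ ≤ Filter.liminf (fun i => ∫⁻ z, f i z ∂μ) u := lintegral_liminf_le' hf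
    _ ≤ Filter.liminf c u := Filter.liminf_le_liminf hle
    _ = C := hc.liminf_eq

lemma two_mul_sqrt_mul_div_le {x u t : ℝ} (y : ℝ) (hx : 0 < x) (hu : 0 ≤ u) (ht0 : 0 < t)
    (ht1 : t < 1) :
    2 * (√y * u) / (√((1 - t) * x + t * u) + √x) ≤
      2 / t * (√(((1 - t) * x + t * u) * y) - √(x * y)) + 2 / (1 + √(1 - t)) * √(x * y) := by
  have h1t : 0 < 1 - t := sub_pos.2 ht1
  have hxt : 0 < (1 - t) * x + t * u := by positivity
  rw [Real.sqrt_mul hxt.le, Real.sqrt_mul hx.le]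
  obtain ⟨s, hs⟩ : ∃ s, s = √((1 - t) * x + t * u) := ⟨_, rfl⟩
  obtain ⟨r, hr⟩ : ∃ r, r = √x := ⟨_, rfl⟩
  rw [← hs, ← hr]
  have hs_pos : 0 < s := hs ▸ Real.sqrt_pos.2 hxt
  have hr_pos : 0 < r := hr ▸ Real.sqrt_pos.2 hx
  have hs_sq : s ^ 2 = (1 - t) * x + t * u := hs ▸ Real.sq_sqrt hxt.le
  have hr_sq : r ^ 2 = x := hr ▸ Real.sq_sqrt hx.le
  have hsr : √(1 - t) * r ≤ s := by
    rw [hr, hs, ← Real.sqrt_mul h1t.le]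
    exact Real.sqrt_le_sqrt (le_add_of_nonneg_right (mul_nonneg ht0.le hu))
  have hratio : r / (s + r) ≤ 1 / (1 + √(1 - t)) := by
    rw [div_le_div_iff₀ (by positivity) (by positivity)]
    linarith
  have hu_eq : u = (s ^ 2 - r ^ 2) / t + r ^ 2 := by
    rw [hs_sq, hr_sq]
    field_simp
    ring
  calc 2 * (√y * u) / (s + r)
      = 2 / t * (s * √y - r * √y) + 2 * (r * √y) * (r / (s + r)) := by
        rw [hu_eq]
        field_simp
        ring
    _ ≤ 2 / t * (s * √y - r * √y) + 2 * (r * √y) * (1 / (1 + √(1 - t))) := by gcongr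
    _ = 2 / t * (s * √y - r * √y) + 2 / (1 + √(1 - t)) * (r * √y) := by ring

variable {ν : Measure Ω} {x y u : Ω → ℝ}

lemma lintegral_two_mul_sqrt_mul_div_le {t : ℝ} (hx : ∀ z, 0 < x z) (hu : ∀ z, 0 ≤ u z)
    (hx_int : Integrable x ν) (hy_int : Integrable y ν) (hu_int : Integrable u ν)
    (ht0 : 0 < t) (ht1 : t < 1)
    (hle : ∫ z, √(((1 - t) * x z + t * u z) * y z) ∂ν ≤ ∫ z, √(x z * y z) ∂ν) :
    ∫⁻ z, ENNReal.ofReal (2 * (√(y z) * u z) / (√((1 - t) * x z + t * u z) + √(x z))) ∂ν ≤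
      ENNReal.ofReal (2 / (1 + √(1 - t)) * ∫ z, √(x z * y z) ∂ν) := by
  have hxy_int := integrable_sqrt_mul hx_int hy_int
  have hxty_int : Integrable (fun z => √(((1 - t) * x z + t * u z) * y z)) ν :=
    integrable_sqrt_mul ((hx_int.const_mul (1 - t)).add (hu_int.const_mul t)) hy_int
  have hbound (z : Ω) := two_mul_sqrt_mul_div_le (y z) (hx z) (hu z) ht0 ht1
  have hnonneg (z : Ω) :
      0 ≤ 2 * (√(y z) * u z) / (√((1 - t) * x z + t * u z) + √(x z)) := by
    have := hu z
    positivity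
  calc _ ≤ ∫⁻ z, ENNReal.ofReal (2 / t * (√(((1 - t) * x z + t * u z) * y z) - √(x z * y z)) +
        2 / (1 + √(1 - t)) * √(x z * y z)) ∂ν :=
        lintegral_mono fun z => ENNReal.ofReal_le_ofReal (hbound z)
    _ = ENNReal.ofReal (∫ z, (2 / t * (√(((1 - t) * x z + t * u z) * y z) - √(x z * y z)) +
        2 / (1 + √(1 - t)) * √(x z * y z)) ∂ν) :=
        (ofReal_integral_eq_lintegral_ofReal (by fun_prop)
          (.of_forall fun z => (hnonneg z).trans (hbound z))).symm
    _ = ENNReal.ofReal (2 / t * ((∫ z, √(((1 - t) * x z + t * u z) * y z) ∂ν) -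
        ∫ z, √(x z * y z) ∂ν) + 2 / (1 + √(1 - t)) * ∫ z, √(x z * y z) ∂ν) := by
        rw [integral_add (by fun_prop) (by fun_prop), integral_const_mul, integral_const_mul,
          integral_sub hxty_int hxy_int]
    _ ≤ _ := by
        have hdiff := mul_nonpos_of_nonneg_of_nonpos (by positivity : 0 ≤ 2 / t)
          (sub_nonpos.2 hle)
        exact ENNReal.ofReal_le_ofReal (by linarith)

/-- First-order optimality condition for the concave function `x ↦ ∫ √(x y) ∂ν`: the left side is
twice its derivative at `x` in the direction `u`, and the right side twice that in direction `x`. -/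
theorem lintegral_sqrt_div_sqrt_mul_le (hx : ∀ z, 0 < x z) (hu : ∀ z, 0 ≤ u z)
    (hx_int : Integrable x ν) (hy_int : Integrable y ν) (hu_int : Integrable u ν)
    (hmax : ∀ t ∈ Set.Ioo (0 : ℝ) 1,
      ∫ z, √(((1 - t) * x z + t * u z) * y z) ∂ν ≤ ∫ z, √(x z * y z) ∂ν) :
    ∫⁻ z, ENNReal.ofReal (√(y z) / √(x z) * u z) ∂ν ≤
      ENNReal.ofReal (∫ z, √(x z * y z) ∂ν) := by
  refine lintegral_le_of_tendsto (u := nhdsWithin (0 : ℝ) (Set.Ioi 0))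
    (f := fun t z =>
      ENNReal.ofReal (2 * (√(y z) * u z) / (√((1 - t) * x z + t * u z) + √(x z))))
    (c := fun t => ENNReal.ofReal (2 / (1 + √(1 - t)) * ∫ z, √(x z * y z) ∂ν))
    (fun t => ?_) (.of_forall fun z => ?_) ?_ ?_
  · have hx_meas := hx_int.aemeasurable
    have hy_meas := hy_int.aemeasurable
    have hu_meas := hu_int.aemeasurable
    fun_prop
  · refine ENNReal.tendsto_ofReal (tendsto_nhdsWithin_of_tendsto_nhds ?_)
    have hsqrt : 0 < √(x z) := Real.sqrt_pos.2 (hx z)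
    have hcont : ContinuousAt
        (fun t => 2 * (√(y z) * u z) / (√((1 - t) * x z + t * u z) + √(x z))) 0 :=
      ContinuousAt.div (by fun_prop) (by fun_prop) (by positivity)
    convert hcont.tendsto using 2
    simp only [sub_zero, one_mul, zero_mul, add_zero]
    field_simp
    ring
  · filter_upwards [Ioo_mem_nhdsGT one_pos] with t ht
    exact lintegral_two_mul_sqrt_mul_div_le hx hu hx_int hy_int hu_int ht.1 ht.2 (hmax t ht)
  · refine ENNReal.tendsto_ofReal (tendsto_nhdsWithin_of_tendsto_nhds ?_)
    have hcont : ContinuousAt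
        (fun t : ℝ => 2 / (1 + √(1 - t)) * ∫ z, √(x z * y z) ∂ν) 0 :=
      (ContinuousAt.div (by fun_prop) (by fun_prop) (by positivity)).mul continuousAt_const
    convert hcont.tendsto using 2
    norm_num

end Variation

section Minimax

variable {ι κ : Type*} [Fintype ι] [Fintype κ]

lemma sum_mul_pos_of_mem_stdSimplex {w a : ι → ℝ} (hw : w ∈ stdSimplex ℝ ι)
    (ha : ∀ i, 0 < a i) : 0 < ∑ i, w i * a i :=
  (convex_Ioi (0 : ℝ)).sum_mem (fun i _ => hw.1 i) hw.2 fun i _ => ha i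

lemma abs_sum_mul_le_of_mem_stdSimplex {w : ι → ℝ} (hw : w ∈ stdSimplex ℝ ι) (a : ι → ℝ) :
    |∑ i, w i * a i| ≤ ∑ i, |a i| := by
  refine (Finset.abs_sum_le_sum_abs _ _).trans (Finset.sum_le_sum fun i _ => ?_)
  rw [abs_mul, abs_of_nonneg (hw.1 i)]
  exact mul_le_of_le_one_left (abs_nonneg _) (mem_Icc_of_mem_stdSimplex hw i).2

variable {ν : Measure Ω} {p : ι → Ω → ℝ} {q : κ → Ω → ℝ}

lemma continuousOn_integral_sqrt_sum_mul_sum (hp_int : ∀ i, Integrable (p i) ν)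
    (hq_int : ∀ j, Integrable (q j) ν) :
    ContinuousOn (fun wv : (ι → ℝ) × (κ → ℝ) =>
      ∫ z, √((∑ i, wv.1 i * p i z) * ∑ j, wv.2 j * q j z) ∂ν)
      (stdSimplex ℝ ι ×ˢ stdSimplex ℝ κ) := by
  refine continuousOn_of_dominated (bound := fun z => (∑ i, |p i z|) + ∑ j, |q j z|)
    (fun wv _ => (integrable_sqrt_mul (by fun_prop) (by fun_prop)).1) ?_ (by fun_prop)
    (.of_forall fun z => by fun_prop)
  rintro ⟨w, v⟩ ⟨hw, hv⟩
  refine .of_forall fun z => ?_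
  rw [Real.norm_of_nonneg (Real.sqrt_nonneg _)]
  exact (sqrt_mul_le_abs_add_abs _ _).trans (add_le_add
    (abs_sum_mul_le_of_mem_stdSimplex hw _) (abs_sum_mul_le_of_mem_stdSimplex hv _))

lemma lintegral_sqrt_div_sqrt_sum_mul_le {y : Ω → ℝ} {w : ι → ℝ} (hw : w ∈ stdSimplex ℝ ι)
    (hp : ∀ i z, 0 < p i z) (hp_int : ∀ i, Integrable (p i) ν) (hy_int : Integrable y ν)
    (hmax : ∀ w' ∈ stdSimplex ℝ ι, ∫ z, √((∑ i, w' i * p i z) * y z) ∂ν ≤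
      ∫ z, √((∑ i, w i * p i z) * y z) ∂ν) (i : ι) :
    ∫⁻ z, ENNReal.ofReal (√(y z) / √(∑ i, w i * p i z) * p i z) ∂ν ≤
      ENNReal.ofReal (∫ z, √((∑ i, w i * p i z) * y z) ∂ν) := by
  classical
  refine lintegral_sqrt_div_sqrt_mul_le
    (fun z => sum_mul_pos_of_mem_stdSimplex hw fun i => hp i z) (fun z => (hp i z).le)
    (by fun_prop) hy_int (hp_int i) fun t ht => ?_
  have hmem : (1 - t) • w + t • Pi.single i 1 ∈ stdSimplex ℝ ι :=
    convex_stdSimplex ℝ ι hw (single_mem_stdSimplex ℝ i) (sub_nonneg.2 ht.2.le) ht.1.le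
      (sub_add_cancel 1 t)
  convert hmax _ hmem using 5 with z
  simp only [Pi.add_apply, Pi.smul_apply, smul_eq_mul, add_mul, Finset.sum_add_distrib,
    mul_assoc, ← Finset.mul_sum, Pi.single_apply, ite_mul, one_mul, zero_mul,
    Finset.sum_ite_eq', Finset.mem_univ, if_true]

theorem exists_lintegral_mul_le_of_integral_sqrt_sum_mul_sum_le [Nonempty ι] [Nonempty κ]
    {ρ : ℝ} (hp_meas : ∀ i, Measurable (p i)) (hq_meas : ∀ j, Measurable (q j))
    (hp : ∀ i z, 0 < p i z) (hq : ∀ j z, 0 < q j z)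
    (hp_int : ∀ i, Integrable (p i) ν) (hq_int : ∀ j, Integrable (q j) ν)
    (hρ : ∀ w ∈ stdSimplex ℝ ι, ∀ v ∈ stdSimplex ℝ κ,
      ∫ z, √((∑ i, w i * p i z) * ∑ j, v j * q j z) ∂ν ≤ ρ) :
    ∃ g : Ω → ℝ, Measurable g ∧ (∀ z, 0 < g z) ∧
      (∀ i, ∫⁻ z, ENNReal.ofReal (g z * p i z) ∂ν ≤ ENNReal.ofReal ρ) ∧
      ∀ j, ∫⁻ z, ENNReal.ofReal ((g z)⁻¹ * q j z) ∂ν ≤ ENNReal.ofReal ρ := by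
  -- A least favourable pair of mixtures maximizes the affinity; `g` is the square root of its
  -- likelihood ratio, and optimality in each coordinate gives the bounds.
  classical
  obtain ⟨⟨w, v⟩, ⟨hw, hv⟩, hmax⟩ := ((isCompact_stdSimplex (𝕜 := ℝ) (ι := ι)).prod
    (isCompact_stdSimplex (𝕜 := ℝ) (ι := κ))).exists_isMaxOn
    (⟨(Pi.single (Classical.arbitrary ι) 1, Pi.single (Classical.arbitrary κ) 1),
      single_mem_stdSimplex ℝ _, single_mem_stdSimplex ℝ _⟩)
    (continuousOn_integral_sqrt_sum_mul_sum hp_int hq_int)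
  have hle {w'} (hw' : w' ∈ stdSimplex ℝ ι) {v'} (hv' : v' ∈ stdSimplex ℝ κ) :
      ∫ z, √((∑ i, w' i * p i z) * ∑ j, v' j * q j z) ∂ν ≤
        ∫ z, √((∑ i, w i * p i z) * ∑ j, v j * q j z) ∂ν := hmax (Set.mk_mem_prod hw' hv')
  have hx (z : Ω) : 0 < √(∑ i, w i * p i z) :=
    Real.sqrt_pos.2 (sum_mul_pos_of_mem_stdSimplex hw fun i => hp i z)
  have hy (z : Ω) : 0 < √(∑ j, v j * q j z) :=
    Real.sqrt_pos.2 (sum_mul_pos_of_mem_stdSimplex hv fun j => hq j z)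
  refine ⟨fun z => √(∑ j, v j * q j z) / √(∑ i, w i * p i z), by fun_prop,
    fun z => div_pos (hy z) (hx z), fun i => ?_, fun j => ?_⟩
  · exact (lintegral_sqrt_div_sqrt_sum_mul_le hw hp hp_int (by fun_prop)
      (fun w' hw' => hle hw' hv) i).trans
      (ENNReal.ofReal_le_ofReal (hρ w hw v hv))
  · have hopt := lintegral_sqrt_div_sqrt_sum_mul_le (y := fun z => ∑ i, w i * p i z) hv hq hq_int
      (by fun_prop) (fun v' hv' => by
        simpa only [mul_comm (∑ i, w i * p i _)] using hle hw hv') j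
    simp only [inv_div]
    refine hopt.trans (ENNReal.ofReal_le_ofReal ?_)
    simpa only [mul_comm (∑ i, w i * p i _)] using hρ w hw v hv

end Minimax

section FiniteFamilies

lemma sqrt_add_sq_mul_add_sq_le {s t δ : ℝ} (hs : 0 ≤ s) (ht : 0 ≤ t) (hδ : 0 ≤ δ) :
    √((s + δ ^ 2) * (t + δ ^ 2)) ≤ √(s * t) + δ * (s + t + (1 + δ ^ 2)) := by
  refine Real.sqrt_le_iff.2 ⟨by positivity, ?_⟩
  have hst := Real.sq_sqrt (mul_nonneg hs ht)
  have hcross : 0 ≤ √(s * t) * (δ * (s + t + (1 + δ ^ 2))) := by positivity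
  have hsq : s + t + δ ^ 2 ≤ (s + t + (1 + δ ^ 2)) ^ 2 := by nlinarith [sq_nonneg δ]
  calc (s + δ ^ 2) * (t + δ ^ 2) = s * t + δ ^ 2 * (s + t + δ ^ 2) := by ring
    _ ≤ s * t + δ ^ 2 * (s + t + (1 + δ ^ 2)) ^ 2 := by gcongr
    _ ≤ (√(s * t) + δ * (s + t + (1 + δ ^ 2))) ^ 2 := by linarith

lemma exists_pos_mul_add_lt (A B : ℝ) {c : ℝ} (hc : 0 < c) :
    ∃ δ, 0 < δ ∧ δ * (A + (1 + δ ^ 2) * B) < c := by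
  have hlim : Filter.Tendsto (fun δ => δ * (A + (1 + δ ^ 2) * B)) (nhds 0) (nhds 0) :=
    Continuous.tendsto' (by fun_prop) 0 0 (zero_mul _)
  obtain ⟨δ, hδ, hδ_pos⟩ := (((hlim.eventually_lt_const hc).filter_mono
    nhdsWithin_le_nhds).and (self_mem_nhdsWithin (s := Set.Ioi 0))).exists
  exact ⟨δ, hδ_pos, hδ⟩

variable {ι κ : Type*} [Fintype ι] [Fintype κ]

lemma sum_mul_add_of_mem_stdSimplex {w : ι → ℝ} (hw : w ∈ stdSimplex ℝ ι) (a : ι → ℝ) (c : ℝ) :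
    ∑ i, w i * (a i + c) = (∑ i, w i * a i) + c := by
  simp only [mul_add, Finset.sum_add_distrib, ← Finset.sum_mul, hw.2, one_mul]

section Densities

variable {ν : Measure Ω} [IsFiniteMeasure ν] {p : ι → Ω → ℝ} {q : κ → Ω → ℝ}

lemma integral_sqrt_sum_mul_sum_add_sq_le (hp : ∀ i z, 0 ≤ p i z) (hq : ∀ j z, 0 ≤ q j z)
    (hp_int : ∀ i, Integrable (p i) ν) (hq_int : ∀ j, Integrable (q j) ν) {w : ι → ℝ} {v : κ → ℝ}
    (hw : w ∈ stdSimplex ℝ ι) (hv : v ∈ stdSimplex ℝ κ) {δ : ℝ} (hδ : 0 ≤ δ) :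
    ∫ z, √((∑ i, w i * (p i z + δ ^ 2)) * ∑ j, v j * (q j z + δ ^ 2)) ∂ν ≤
      (∫ z, √((∑ i, w i * p i z) * ∑ j, v j * q j z) ∂ν) +
        δ * ((∑ i, ∫ z, |p i z| ∂ν) + (∑ j, ∫ z, |q j z| ∂ν) +
          (1 + δ ^ 2) * ν.real Set.univ) := by
  have hsqrt_int := integrable_sqrt_mul (f := fun z => ∑ i, w i * p i z)
    (g := fun z => ∑ j, v j * q j z) (ν := ν) (by fun_prop) (by fun_prop)
  calc ∫ z, √((∑ i, w i * (p i z + δ ^ 2)) * ∑ j, v j * (q j z + δ ^ 2)) ∂ν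
      ≤ ∫ z, (√((∑ i, w i * p i z) * ∑ j, v j * q j z) +
          δ * ((∑ i, |p i z|) + (∑ j, |q j z|) + (1 + δ ^ 2))) ∂ν := by
        refine integral_mono (integrable_sqrt_mul (by fun_prop) (by fun_prop)) (by fun_prop)
          fun z => ?_
        simp only [sum_mul_add_of_mem_stdSimplex hw, sum_mul_add_of_mem_stdSimplex hv]
        refine (sqrt_add_sq_mul_add_sq_le
          (Finset.sum_nonneg fun i _ => mul_nonneg (hw.1 i) (hp i z))
          (Finset.sum_nonneg fun j _ => mul_nonneg (hv.1 j) (hq j z)) hδ).trans ?_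
        gcongr _ + δ * (?_ + ?_ + _)
        · exact (le_abs_self _).trans (abs_sum_mul_le_of_mem_stdSimplex hw _)
        · exact (le_abs_self _).trans (abs_sum_mul_le_of_mem_stdSimplex hv _)
    _ = _ := by
        rw [integral_add (by fun_prop) (by fun_prop), integral_const_mul,
          integral_add (by fun_prop) (by fun_prop), integral_add (by fun_prop) (by fun_prop),
          integral_finsetSum _ (by fun_prop), integral_finsetSum _ (by fun_prop),
          integral_const, smul_eq_mul, mul_comm (ν.real _)]

theorem exists_lintegral_mul_le_of_integral_sqrt_sum_mul_sum_le_of_lt [Nonempty ι] [Nonempty κ]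
    {ρ ρ' : ℝ} (hp_meas : ∀ i, Measurable (p i)) (hq_meas : ∀ j, Measurable (q j))
    (hp : ∀ i z, 0 ≤ p i z) (hq : ∀ j z, 0 ≤ q j z)
    (hp_int : ∀ i, Integrable (p i) ν) (hq_int : ∀ j, Integrable (q j) ν)
    (hρ : ∀ w ∈ stdSimplex ℝ ι, ∀ v ∈ stdSimplex ℝ κ,
      ∫ z, √((∑ i, w i * p i z) * ∑ j, v j * q j z) ∂ν ≤ ρ) (hlt : ρ < ρ') :
    ∃ g : Ω → ℝ, Measurable g ∧ (∀ z, 0 < g z) ∧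
      (∀ i, ∫⁻ z, ENNReal.ofReal (g z * p i z) ∂ν ≤ ENNReal.ofReal ρ') ∧
      ∀ j, ∫⁻ z, ENNReal.ofReal ((g z)⁻¹ * q j z) ∂ν ≤ ENNReal.ofReal ρ' := by
  -- Adding a small constant to all densities makes them positive and barely changes affinities.
  obtain ⟨δ, hδ, hsmall⟩ := exists_pos_mul_add_lt
    ((∑ i, ∫ z, |p i z| ∂ν) + ∑ j, ∫ z, |q j z| ∂ν) (ν.real Set.univ) (sub_pos.2 hlt)
  obtain ⟨g, hg_meas, hg, hgp, hgq⟩ := exists_lintegral_mul_le_of_integral_sqrt_sum_mul_sum_le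
    (p := fun i z => p i z + δ ^ 2) (q := fun j z => q j z + δ ^ 2) (by fun_prop) (by fun_prop)
    (fun i z => add_pos_of_nonneg_of_pos (hp i z) (pow_pos hδ 2))
    (fun j z => add_pos_of_nonneg_of_pos (hq j z) (pow_pos hδ 2)) (by fun_prop) (by fun_prop)
    (ρ := ρ') fun w hw v hv => by
      linarith [hρ w hw v hv, integral_sqrt_sum_mul_sum_add_sq_le hp hq hp_int hq_int hw hv hδ.le]
  refine ⟨g, hg_meas, hg, fun i => (lintegral_mono fun z => ?_).trans (hgp i),
    fun j => (lintegral_mono fun z => ?_).trans (hgq j)⟩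
  · have := hg z
    gcongr
    exact le_add_of_nonneg_right (sq_nonneg δ)
  · have := hg z
    gcongr
    exact le_add_of_nonneg_right (sq_nonneg δ)

end Densities

lemma toReal_rnDeriv_sum_ofReal_smul (ν : Measure Ω) [SigmaFinite ν] {w : ι → ℝ}
    (hw : ∀ i, 0 ≤ w i) (μ : ι → Measure Ω) [∀ i, IsFiniteMeasure (μ i)] :
    (fun z => ((∑ i, ENNReal.ofReal (w i) • μ i).rnDeriv ν z).toReal) =ᵐ[ν]
      fun z => ∑ i, w i * ((μ i).rnDeriv ν z).toReal := by
  classical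
  have (i : ι) := (μ i).smul_finite (ENNReal.ofReal_ne_top (r := w i))
  induction (Finset.univ : Finset ι) using Finset.induction_on with
  | empty =>
    filter_upwards [Measure.rnDeriv_zero ν] with z hz
    simp only [Finset.sum_empty, hz, Pi.zero_apply, ENNReal.toReal_zero]
  | insert i s hi ih =>
    filter_upwards [ih, Measure.rnDeriv_add (ENNReal.ofReal (w i) • μ i)
      (∑ j ∈ s, ENNReal.ofReal (w j) • μ j) ν,
      Measure.rnDeriv_smul_left_of_ne_top (μ i) ν (ENNReal.ofReal_ne_top (r := w i)),
      (μ i).rnDeriv_ne_top ν, (∑ j ∈ s, ENNReal.ofReal (w j) • μ j).rnDeriv_ne_top ν]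
      with z hz hadd hsmul hi_top hs_top
    rw [Finset.sum_insert hi, Finset.sum_insert hi, hadd, Pi.add_apply, hsmul, Pi.smul_apply,
      smul_eq_mul, ENNReal.toReal_add (by finiteness) hs_top, hz, ENNReal.toReal_mul,
      ENNReal.toReal_ofReal (hw i)]

lemma sum_ofReal_smul_absolutelyContinuous {ν : Measure Ω} {μ : ι → Measure Ω}
    (hμ : ∀ i, μ i ≪ ν) (w : ι → ℝ) : ∑ i, ENNReal.ofReal (w i) • μ i ≪ ν := by
  rw [← Measure.sum_fintype]
  exact Measure.absolutelyContinuous_sum_left fun i => (hμ i).smul_left _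

lemma integral_sqrt_sum_mul_sum_eq_hellingerAffinity {ν : Measure Ω} [SigmaFinite ν]
    {μ : ι → Measure Ω} {η : κ → Measure Ω} [∀ i, IsFiniteMeasure (μ i)]
    [∀ j, IsFiniteMeasure (η j)] (hμ : ∀ i, μ i ≪ ν) (hη : ∀ j, η j ≪ ν) {w : ι → ℝ} {v : κ → ℝ}
    (hw : ∀ i, 0 ≤ w i) (hv : ∀ j, 0 ≤ v j) :
    ∫ z, √((∑ i, w i * ((μ i).rnDeriv ν z).toReal) * ∑ j, v j * ((η j).rnDeriv ν z).toReal) ∂ν =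
      hellingerAffinity (∑ i, ENNReal.ofReal (w i) • μ i)
        (∑ j, ENNReal.ofReal (v j) • η j) := by
  have (i : ι) := (μ i).smul_finite (ENNReal.ofReal_ne_top (r := w i))
  have (j : κ) := (η j).smul_finite (ENNReal.ofReal_ne_top (r := v j))
  rw [hellingerAffinity_eq_integral (sum_ofReal_smul_absolutelyContinuous hμ w)
    (sum_ofReal_smul_absolutelyContinuous hη v)]
  refine integral_congr_ae ?_
  filter_upwards [toReal_rnDeriv_sum_ofReal_smul ν hw μ, toReal_rnDeriv_sum_ofReal_smul ν hv η]
    with z hzμ hzη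
  rw [hzμ, hzη]

lemma lintegral_ofReal_mul_toReal_rnDeriv {μ ν : Measure Ω} [IsFiniteMeasure μ] [SigmaFinite ν]
    (hμ : μ ≪ ν) {g : Ω → ℝ} (hg_meas : Measurable g) (hg : ∀ z, 0 ≤ g z) :
    ∫⁻ z, ENNReal.ofReal (g z * (μ.rnDeriv ν z).toReal) ∂ν = ∫⁻ z, ENNReal.ofReal (g z) ∂μ := by
  rw [← lintegral_rnDeriv_mul hμ (by fun_prop)]
  refine lintegral_congr_ae ?_
  filter_upwards [μ.rnDeriv_ne_top ν] with z hz
  rw [ENNReal.ofReal_mul (hg z), ENNReal.ofReal_toReal hz, mul_comm]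

theorem exists_lintegral_le_of_hellingerAffinity_le [Nonempty ι] [Nonempty κ]
    {μ : ι → Measure Ω} {η : κ → Measure Ω} [∀ i, IsFiniteMeasure (μ i)]
    [∀ j, IsFiniteMeasure (η j)] {ρ ρ' : ℝ}
    (hρ : ∀ w ∈ stdSimplex ℝ ι, ∀ v ∈ stdSimplex ℝ κ,
      hellingerAffinity (∑ i, ENNReal.ofReal (w i) • μ i)
        (∑ j, ENNReal.ofReal (v j) • η j) ≤ ρ) (hlt : ρ < ρ') :
    ∃ g : Ω → ℝ, Measurable g ∧ (∀ z, 0 < g z) ∧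
      (∀ i, ∫⁻ z, ENNReal.ofReal (g z) ∂(μ i) ≤ ENNReal.ofReal ρ') ∧
      ∀ j, ∫⁻ z, ENNReal.ofReal (g z)⁻¹ ∂(η j) ≤ ENNReal.ofReal ρ' := by
  obtain ⟨ν, hν⟩ : ∃ ν, ν = ∑ i, μ i + ∑ j, η j := ⟨_, rfl⟩
  have : IsFiniteMeasure ν := hν ▸ inferInstance
  obtain ⟨hμ, hη⟩ := Measure.AbsolutelyContinuous.add_left_iff.1 hν.symm.absolutelyContinuous
  replace hμ (i : ι) : μ i ≪ ν := (Measure.le_sum μ i).absolutelyContinuous.trans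
    (Measure.sum_fintype μ ▸ hμ)
  replace hη (j : κ) : η j ≪ ν := (Measure.le_sum η j).absolutelyContinuous.trans
    (Measure.sum_fintype η ▸ hη)
  obtain ⟨g, hg_meas, hg, hgμ, hgη⟩ :=
    exists_lintegral_mul_le_of_integral_sqrt_sum_mul_sum_le_of_lt (ν := ν)
    (p := fun i z => ((μ i).rnDeriv ν z).toReal) (q := fun j z => ((η j).rnDeriv ν z).toReal)
    (by fun_prop) (by fun_prop) (fun _ _ => toReal_nonneg) (fun _ _ => toReal_nonneg)
    (fun _ => Measure.integrable_toReal_rnDeriv) (fun _ => Measure.integrable_toReal_rnDeriv)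
    (fun w hw v hv =>
      (integral_sqrt_sum_mul_sum_eq_hellingerAffinity hμ hη hw.1 hv.1).trans_le (hρ w hw v hv))
    hlt
  refine ⟨g, hg_meas, hg, fun i => ?_, fun j => ?_⟩
  · exact (lintegral_ofReal_mul_toReal_rnDeriv (hμ i) hg_meas
      fun z => (hg z).le).symm.trans_le (hgμ i)
  · exact (lintegral_ofReal_mul_toReal_rnDeriv (hη j) hg_meas.inv
      fun z => inv_nonneg.2 (hg z).le).symm.trans_le (hgη j)

end FiniteFamilies

section Compactness

variable {ν : Measure Ω}

lemma isClosed_setOf_lintegral_ofReal_comp_le {m : Measure Ω} (hm : m ≪ ν) {f : ℝ → ℝ}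
    (hf : Continuous f) (e : ℝ≥0∞) :
    IsClosed {φ : Lp ℝ 2 ν | ∫⁻ z, ENNReal.ofReal (f (φ z)) ∂m ≤ e} := by
  refine IsSeqClosed.isClosed fun φ ψ hφ hlim => ?_
  obtain ⟨s, -, hs⟩ := (tendstoInMeasure_of_tendsto_Lp hlim).exists_seq_tendsto_ae
  refine lintegral_le_of_tendsto (u := Filter.atTop)
    (f := fun n z => ENNReal.ofReal (f (φ (s n) z)))
    (fun n => (hf.measurable.comp (Lp.stronglyMeasurable _).measurable).ennreal_ofReal.aemeasurable)
    ?_ (.of_forall fun n => hφ (s n)) tendsto_const_nhds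
  filter_upwards [hm.ae_le hs] with z hz
  exact ENNReal.tendsto_ofReal ((hf.tendsto _).comp hz)

lemma convex_setOf_lintegral_ofReal_comp_le {m : Measure Ω} (hm : m ≪ ν) {f : ℝ → ℝ}
    (hf_meas : Measurable f) (hf : ConvexOn ℝ Set.univ f) (e : ℝ≥0∞) :
    Convex ℝ {φ : Lp ℝ 2 ν | ∫⁻ z, ENNReal.ofReal (f (φ z)) ∂m ≤ e} := by
  intro φ hφ ψ hψ a b ha hb hab
  have hmeas (χ : Lp ℝ 2 ν) : Measurable fun z => ENNReal.ofReal (f (χ z)) :=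
    (hf_meas.comp (Lp.stronglyMeasurable _).measurable).ennreal_ofReal
  calc ∫⁻ z, ENNReal.ofReal (f ((a • φ + b • ψ : Lp ℝ 2 ν) z)) ∂m
      ≤ ∫⁻ z, (ENNReal.ofReal a * ENNReal.ofReal (f (φ z)) +
          ENNReal.ofReal b * ENNReal.ofReal (f (ψ z))) ∂m := by
        refine lintegral_mono_ae ?_
        filter_upwards [hm.ae_le (Lp.coeFn_add (a • φ) (b • ψ)), hm.ae_le (Lp.coeFn_smul a φ),
          hm.ae_le (Lp.coeFn_smul b ψ)] with z hadd hφz hψz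
        rw [hadd, Pi.add_apply, hφz, hψz, ← ENNReal.ofReal_mul ha, ← ENNReal.ofReal_mul hb]
        exact (ENNReal.ofReal_le_ofReal
          (hf.2 (Set.mem_univ _) (Set.mem_univ _) ha hb hab)).trans ENNReal.ofReal_add_le
    _ = ENNReal.ofReal a * ∫⁻ z, ENNReal.ofReal (f (φ z)) ∂m +
          ENNReal.ofReal b * ∫⁻ z, ENNReal.ofReal (f (ψ z)) ∂m := by
        rw [lintegral_add_left ((hmeas φ).const_mul _), lintegral_const_mul _ (hmeas φ),
          lintegral_const_mul _ (hmeas ψ)]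
    _ ≤ ENNReal.ofReal a * e + ENNReal.ofReal b * e :=
        add_le_add (mul_le_mul_right hφ _) (mul_le_mul_right hψ _)
    _ = e := by rw [← add_mul, ← ENNReal.ofReal_add ha hb, hab, ENNReal.ofReal_one, one_mul]

lemma measure_setOf_half_le_le {m : Measure Ω} {f : Ω → ℝ} (hf : Measurable f) {e : ℝ≥0∞}
    (he : ∫⁻ z, ENNReal.ofReal (f z) ∂m ≤ e) : m {z | 1 / 2 ≤ f z} ≤ 2 * e :=
  calc m {z | 1 / 2 ≤ f z} ≤ m {z | 2⁻¹ ≤ ENNReal.ofReal (f z)} := by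
        refine measure_mono fun z hz => ?_
        simpa [ENNReal.ofReal_inv_of_pos] using ENNReal.ofReal_le_ofReal hz
    _ ≤ (∫⁻ z, ENNReal.ofReal (f z) ∂m) / 2⁻¹ :=
        meas_ge_le_lintegral_div hf.ennreal_ofReal.aemeasurable (by norm_num) (by norm_num)
    _ ≤ 2 * e := by
        rw [ENNReal.div_eq_inv_mul, inv_inv]
        gcongr

variable [IsFiniteMeasure ν] {ι κ : Type*} {μ : ι → Measure Ω} {η : κ → Measure Ω}

lemma lintegral_ofReal_indicatorConstLp {m : Measure Ω} (hm : m ≪ ν) {T : Set Ω}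
    (hT : MeasurableSet T) :
    ∫⁻ z, ENNReal.ofReal (indicatorConstLp 2 hT (measure_ne_top ν T) (1 : ℝ) z) ∂m = m T := by
  rw [← lintegral_indicator_one hT]
  refine lintegral_congr_ae ?_
  filter_upwards [hm.ae_le (indicatorConstLp_coeFn (p := 2) (hs := hT)
    (hμs := measure_ne_top ν T) (c := (1 : ℝ)))] with z hz
  by_cases hzT : z ∈ T <;> simp [hz, hzT]

lemma lintegral_ofReal_one_sub_indicatorConstLp {m : Measure Ω} (hm : m ≪ ν) {T : Set Ω}
    (hT : MeasurableSet T) :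
    ∫⁻ z, ENNReal.ofReal (1 - indicatorConstLp 2 hT (measure_ne_top ν T) (1 : ℝ) z) ∂m =
      m Tᶜ := by
  rw [← lintegral_indicator_one hT.compl]
  refine lintegral_congr_ae ?_
  filter_upwards [hm.ae_le (indicatorConstLp_coeFn (p := 2) (hs := hT)
    (hμs := measure_ne_top ν T) (c := (1 : ℝ)))] with z hz
  by_cases hzT : z ∈ T <;> simp [hz, hzT]

theorem exists_Lp_lintegral_le_of_finite (hμ : ∀ i, μ i ≪ ν) (hη : ∀ j, η j ≪ ν) {e : ℝ≥0∞}
    (hfin : ∀ (F : Finset ι) (G : Finset κ), ∃ T, MeasurableSet T ∧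
      (∀ i ∈ F, μ i T ≤ e) ∧ ∀ j ∈ G, η j Tᶜ ≤ e) :
    ∃ φ : Lp ℝ 2 ν, (∀ i, ∫⁻ z, ENNReal.ofReal (φ z) ∂(μ i) ≤ e) ∧
      ∀ j, ∫⁻ z, ENNReal.ofReal (1 - φ z) ∂(η j) ≤ e := by
  let K : ι ⊕ κ → Set (Lp ℝ 2 ν) :=
    Sum.elim (fun i => {φ | ∫⁻ z, ENNReal.ofReal (φ z) ∂(μ i) ≤ e})
      fun j => {φ | ∫⁻ z, ENNReal.ofReal (1 - φ z) ∂(η j) ≤ e}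
  have hclosed (k) : IsClosed (K k) := by
    rcases k with i | j
    · exact isClosed_setOf_lintegral_ofReal_comp_le (hμ i) continuous_id e
    · exact isClosed_setOf_lintegral_ofReal_comp_le (hη j) (continuous_const.sub continuous_id) e
  have hconv (k) : Convex ℝ (K k) := by
    rcases k with i | j
    · exact convex_setOf_lintegral_ofReal_comp_le (hμ i) measurable_id (convexOn_id convex_univ) e
    · exact convex_setOf_lintegral_ofReal_comp_le (hη j) (measurable_id.const_sub 1)
        ((convexOn_const 1 convex_univ).sub (concaveOn_id convex_univ)) e
  have hK_fin (F : Finset (ι ⊕ κ)) :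
      ∃ φ ∈ ⋂ k ∈ F, K k, ‖φ‖ ≤ ν.real Set.univ ^ (1 / (2 : ℝ≥0∞).toReal) := by
    obtain ⟨T, hT, hμT, hηT⟩ := hfin F.toLeft F.toRight
    refine ⟨indicatorConstLp 2 hT (measure_ne_top ν T) 1, Set.mem_iInter₂.2 ?_, ?_⟩
    · rintro (i | j) hk
      · exact (lintegral_ofReal_indicatorConstLp (hμ i) hT).trans_le
          (hμT i (Finset.mem_toLeft.2 hk))
      · exact (lintegral_ofReal_one_sub_indicatorConstLp (hη j) hT).trans_le
          (hηT j (Finset.mem_toRight.2 hk))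
    · rw [norm_indicatorConstLp (by norm_num) (by norm_num), norm_one, one_mul]
      exact Real.rpow_le_rpow measureReal_nonneg (measureReal_mono (Set.subset_univ T))
        (by positivity)
  obtain ⟨φ, hφ⟩ := nonempty_iInter_of_closed_convex_of_finite hclosed hconv _ hK_fin
  rw [Set.mem_iInter] at hφ
  exact ⟨φ, fun i => hφ (.inl i), fun j => hφ (.inr j)⟩

theorem exists_measurableSet_le_two_mul_of_finite (hμ : ∀ i, μ i ≪ ν) (hη : ∀ j, η j ≪ ν)
    {e : ℝ≥0∞} (hfin : ∀ (F : Finset ι) (G : Finset κ), ∃ T, MeasurableSet T ∧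
      (∀ i ∈ F, μ i T ≤ e) ∧ ∀ j ∈ G, η j Tᶜ ≤ e) :
    ∃ T, MeasurableSet T ∧ (∀ i, μ i T ≤ 2 * e) ∧ ∀ j, η j Tᶜ ≤ 2 * e := by
  obtain ⟨φ, hφμ, hφη⟩ := exists_Lp_lintegral_le_of_finite hμ hη hfin
  have hφ_meas : Measurable φ := (Lp.stronglyMeasurable φ).measurable
  refine ⟨{z | 1 / 2 ≤ φ z}, measurableSet_le measurable_const hφ_meas,
    fun i => measure_setOf_half_le_le hφ_meas (hφμ i), fun j => ?_⟩
  refine (measure_mono fun z hz => ?_).trans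
    (measure_setOf_half_le_le (hφ_meas.const_sub 1) (hφη j))
  simp only [Set.mem_compl_iff, Set.mem_ofPred_eq, not_le] at hz ⊢
  linarith

end Compactness

section Testing

lemma ConvexMeasureSet.sum_ofReal_smul_mem {𝒜 : Set (Measure Ω)} (h𝒜 : ConvexMeasureSet 𝒜)
    {ι : Type*} [Fintype ι] {w : ι → ℝ} (hw : w ∈ stdSimplex ℝ ι) {μ : ι → Measure Ω}
    (hμ : ∀ i, μ i ∈ 𝒜) : ∑ i, ENNReal.ofReal (w i) • μ i ∈ 𝒜 := by
  classical
  let S : Set (ι → ℝ) := {w | (∀ i, 0 ≤ w i) ∧ ∑ i, ENNReal.ofReal (w i) • μ i ∈ 𝒜}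
  have hS : Convex ℝ S := by
    rintro w ⟨hw, hw𝒜⟩ v ⟨hv, hv𝒜⟩ a b ha hb hab
    refine ⟨fun i => add_nonneg (mul_nonneg ha (hw i)) (mul_nonneg hb (hv i)), ?_⟩
    convert h𝒜 _ hw𝒜 _ hv𝒜 a ha (by linarith) using 1
    rw [mix, ← eq_sub_of_add_eq' hab, Finset.smul_sum, Finset.smul_sum, ← Finset.sum_add_distrib]
    refine Finset.sum_congr rfl fun i _ => ?_
    rw [smul_smul, smul_smul, ← add_smul, ← ENNReal.ofReal_mul ha, ← ENNReal.ofReal_mul hb,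
      ← ENNReal.ofReal_add (mul_nonneg ha (hw i)) (mul_nonneg hb (hv i))]
    rfl
  have hbasis : Set.range (fun i j : ι => if i = j then (1 : ℝ) else 0) ⊆ S := by
    rintro _ ⟨i, rfl⟩
    refine ⟨fun j => by positivity, ?_⟩
    simpa [apply_ite ENNReal.ofReal, ite_smul] using hμ i
  rw [← convexHull_basis_eq_stdSimplex] at hw
  exact (convexHull_min hbasis hS hw).2

theorem exists_measurableSet_pi_le_of_finite {N ι κ : Type*} [Fintype N] [Fintype ι] [Fintype κ]
    {μ : ι → Measure Z} {η : κ → Measure Z} [∀ i, IsProbabilityMeasure (μ i)]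
    [∀ j, IsProbabilityMeasure (η j)] {ρ ρ' : ℝ}
    (hρ : ∀ w ∈ stdSimplex ℝ ι, ∀ v ∈ stdSimplex ℝ κ,
      hellingerAffinity (∑ i, ENNReal.ofReal (w i) • μ i)
        (∑ j, ENNReal.ofReal (v j) • η j) ≤ ρ) (hlt : ρ < ρ') :
    ∃ T : Set (N → Z), MeasurableSet T ∧
      (∀ i, Measure.pi (fun _ => μ i) T ≤ ENNReal.ofReal ρ' ^ Fintype.card N) ∧
      ∀ j, Measure.pi (fun _ => η j) Tᶜ ≤ ENNReal.ofReal ρ' ^ Fintype.card N := by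
  rcases isEmpty_or_nonempty ι with hι | hι
  · exact ⟨Set.univ, .univ, isEmptyElim, by simp⟩
  rcases isEmpty_or_nonempty κ with hκ | hκ
  · exact ⟨∅, .empty, by simp, isEmptyElim⟩
  obtain ⟨g, hg_meas, hg, hgμ, hgη⟩ := exists_lintegral_le_of_hellingerAffinity_le hρ hlt
  refine ⟨{z | 1 ≤ ∏ i, ENNReal.ofReal (g (z i))},
    measurableSet_le measurable_const (by fun_prop), fun i => ?_, fun j => ?_⟩
  · calc _ ≤ (∫⁻ z, ENNReal.ofReal (g z) ∂(μ i)) ^ Fintype.card N :=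
          measure_pi_one_le_prod_le _ hg_meas.ennreal_ofReal
      _ ≤ _ := by gcongr; exact hgμ i
  · calc _ ≤ Measure.pi (fun _ : N => η j) {z | 1 ≤ ∏ i, ENNReal.ofReal (g (z i))⁻¹} := by
          refine measure_mono fun z hz => ?_
          simp only [Set.mem_compl_iff, Set.mem_ofPred_eq, not_le] at hz ⊢
          rw [← ENNReal.ofReal_prod_of_nonneg fun i _ => (hg (z i)).le,
            ENNReal.ofReal_lt_one] at hz
          rw [← ENNReal.ofReal_prod_of_nonneg fun i _ => inv_nonneg.2 (hg (z i)).le,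
            ENNReal.one_le_ofReal, Finset.prod_inv_distrib]
          exact (one_le_inv₀ (Finset.prod_pos fun i _ => hg (z i))).2 hz.le
      _ ≤ (∫⁻ z, ENNReal.ofReal (g z)⁻¹ ∂(η j)) ^ Fintype.card N :=
          measure_pi_one_le_prod_le _ hg_meas.inv.ennreal_ofReal
      _ ≤ _ := by gcongr; exact hgη j

theorem exists_measurableSet_pi_le_of_hellingerAffinity_le {N : Type*} [Fintype N]
    {𝒜 ℬ : Set (Measure Z)} (h𝒜 : ConvexMeasureSet 𝒜) (hℬ : ConvexMeasureSet ℬ)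
    (h𝒜_prob : ∀ μ ∈ 𝒜, IsProbabilityMeasure μ) (hℬ_prob : ∀ η ∈ ℬ, IsProbabilityMeasure η)
    {ν : Measure Z} [IsProbabilityMeasure ν] (h𝒜_ac : ∀ μ ∈ 𝒜, μ ≪ ν) (hℬ_ac : ∀ η ∈ ℬ, η ≪ ν)
    {ρ ρ' : ℝ} (hρ : ∀ μ ∈ 𝒜, ∀ η ∈ ℬ, hellingerAffinity μ η ≤ ρ) (hlt : ρ < ρ') :
    ∃ T : Set (N → Z), MeasurableSet T ∧
      (∀ μ ∈ 𝒜, Measure.pi (fun _ => μ) T ≤ 2 * ENNReal.ofReal ρ' ^ Fintype.card N) ∧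
      ∀ η ∈ ℬ, Measure.pi (fun _ => η) Tᶜ ≤ 2 * ENNReal.ofReal ρ' ^ Fintype.card N := by
  have (μ : 𝒜) := h𝒜_prob μ μ.2
  have (η : ℬ) := hℬ_prob η η.2
  obtain ⟨T, hT, hT𝒜, hTℬ⟩ := exists_measurableSet_le_two_mul_of_finite
    (ν := Measure.pi fun _ : N => ν)
    (μ := fun μ : 𝒜 => Measure.pi fun _ => μ.1) (η := fun η : ℬ => Measure.pi fun _ => η.1)
    (fun μ => absolutelyContinuous_pi fun _ => h𝒜_ac μ μ.2)
    (fun η => absolutelyContinuous_pi fun _ => hℬ_ac η η.2)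
    (e := ENNReal.ofReal ρ' ^ Fintype.card N) fun F G => by
      simpa using exists_measurableSet_pi_le_of_finite (N := N) (μ := fun μ : F => μ.1.1)
        (η := fun η : G => η.1.1)
        (fun w hw v hv => hρ _ (h𝒜.sum_ofReal_smul_mem hw fun μ => μ.1.2) _
          (hℬ.sum_ofReal_smul_mem hv fun η => η.1.2)) hlt
  exact ⟨T, hT, fun μ hμ => hT𝒜 ⟨μ, hμ⟩, fun η hη => hTℬ ⟨η, hη⟩⟩

end Testing

section Modulus

lemma abs_sub_le_toReal_modulus {d : Measure X → Measure X → ℝ} {P : Set (Measure X)}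
    {θ : Measure X → ℝ} (hA : CondA P θ) {ε : ℝ} {P₀ P₁ : Measure X} (h₀ : P₀ ∈ P) (h₁ : P₁ ∈ P)
    (hd : d P₀ P₁ ≤ ε) : |θ P₀ - θ P₁| ≤ (modulus d P θ ε).toReal := by
  obtain ⟨c, hc⟩ := hA
  have hfinite : modulus d P θ ε ≠ ⊤ := by
    refine ne_top_of_le_ne_top (b := ENNReal.ofReal (2 * c)) ENNReal.ofReal_ne_top ?_
    refine iSup₂_le fun R₀ hR₀ => iSup₂_le fun R₁ hR₁ => iSup_le fun _ =>
      ENNReal.ofReal_le_ofReal ?_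
    linarith [abs_sub (θ R₀) (θ R₁), hc R₀ hR₀, hc R₁ hR₁]
  rw [← ENNReal.ofReal_le_iff_le_toReal hfinite]
  exact le_iSup₂_of_le P₀ h₀ (le_iSup₂_of_le P₁ h₁ (le_iSup_of_le hd le_rfl))

lemma push_mix (Q : Kernel X Z) (lam : ℝ) (P₀ P₁ : Measure X) :
    push Q (mix lam P₀ P₁) = mix lam (push Q P₀) (push Q P₁) := by
  simp only [push, mix, Measure.comp_add, Measure.comp_smul]

lemma ConvexMeasureSet.image_push {P : Set (Measure X)} {θ : Measure X → ℝ}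
    (hconv : ConvexMeasureSet P) (hlin : LinearFunctional P θ) (Q : Kernel X Z) {S : Set ℝ}
    (hS : Convex ℝ S) :
    ConvexMeasureSet (push Q '' {μ | μ ∈ P ∧ θ μ ∈ S}) := by
  rintro _ ⟨μ, ⟨hμ, hμS⟩, rfl⟩ _ ⟨η, ⟨hη, hηS⟩, rfl⟩ lam h0 h1
  refine ⟨mix lam μ η, ⟨hconv μ hμ η hη lam h0 h1, ?_⟩, push_mix Q lam μ η⟩
  rw [hlin μ hμ η hη lam h0 h1]
  exact hS hμS hηS h0 (sub_nonneg.2 h1) (add_sub_cancel _ _)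

instance isProbabilityMeasure_push (Q : Kernel X Z) [IsMarkovKernel Q] (μ : Measure X)
    [IsProbabilityMeasure μ] : IsProbabilityMeasure (push Q μ) :=
  inferInstanceAs (IsProbabilityMeasure (μ.bind Q))

lemma Dominated.exists_push_absolutelyContinuous {P : Set (Measure X)} (hdom : Dominated P)
    (hPprob : ∀ μ ∈ P, IsProbabilityMeasure μ) (hne : P.Nonempty) (Q : Kernel X Z)
    [IsMarkovKernel Q] : ∃ ν : Measure Z, IsProbabilityMeasure ν ∧ ∀ μ ∈ P, push Q μ ≪ ν := by
  obtain ⟨ν, _, hν⟩ := hdom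
  obtain ⟨μ, hμ⟩ := hne
  have : NeZero ν := by
    refine ⟨?_⟩
    rintro rfl
    have := hPprob μ hμ
    exact IsProbabilityMeasure.ne_zero μ (Measure.absolutelyContinuous_zero_iff.1 (hν μ hμ))
  exact ⟨push Q ν.toFinite, inferInstance, fun μ hμ =>
    ((hν μ hμ).trans (absolutelyContinuous_toFinite ν)).comp_right Q⟩

variable {P : Set (Measure X)} {θ : Measure X → ℝ} {Q : Kernel X Z} [IsMarkovKernel Q] {ε : ℝ}

-- Moving from `P₀` towards `P₁` by a fraction `1 / r` costs at most `1 / r` of the squared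
-- Hellinger distance, by convexity, but changes `θ` by exactly `1 / r` of the total difference.
theorem abs_sub_le_max_mul_omegaHQ (hPprob : ∀ μ ∈ P, IsProbabilityMeasure μ) (hA : CondA P θ)
    (hconv : ConvexMeasureSet P) (hlin : LinearFunctional P θ) (hε : 0 < ε) {P₀ P₁ : Measure X}
    (h₀ : P₀ ∈ P) (h₁ : P₁ ∈ P) :
    |θ P₀ - θ P₁| ≤
      max 1 (dH (push Q P₀) (push Q P₁) ^ 2 / ε ^ 2) * (omegaHQ Q P θ ε).toReal := by
  have := hPprob P₀ h₀
  have := hPprob P₁ h₁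
  obtain ⟨r, hr⟩ : ∃ r, r = max 1 (dH (push Q P₀) (push Q P₁) ^ 2 / ε ^ 2) := ⟨_, rfl⟩
  have hr1 : 1 ≤ r := hr ▸ le_max_left _ _
  have hr0 : 0 < r := one_pos.trans_le hr1
  have hdist : dH (push Q P₀) (push Q P₁) ^ 2 ≤ r * ε ^ 2 := by
    rw [← div_le_iff₀ (by positivity), hr]
    exact le_max_right _ _
  have hlam0 : 0 ≤ 1 - r⁻¹ := sub_nonneg.2 (inv_le_one_of_one_le₀ hr1)
  have hlam1 : 1 - r⁻¹ ≤ 1 := sub_le_self _ (by positivity)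
  have hmix : dH (push Q P₀) (push Q (mix (1 - r⁻¹) P₀ P₁)) ≤ ε := by
    refine le_of_sq_le_sq ?_ hε.le
    rw [push_mix]
    refine (dH_sq_mix_le hlam0 hlam1 _ _ _).trans ?_
    rw [dH_self, zero_pow two_ne_zero, mul_zero, zero_add, sub_sub_self, inv_mul_le_iff₀ hr0]
    exact hdist
  have hθ := abs_sub_le_toReal_modulus (d := fun P₀ P₁ => dH (push Q P₀) (push Q P₁)) hA h₀
    (hconv P₀ h₀ P₁ h₁ _ hlam0 hlam1) hmix
  have hstep : θ P₀ - θ (mix (1 - r⁻¹) P₀ P₁) = r⁻¹ * (θ P₀ - θ P₁) := by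
    rw [hlin P₀ h₀ P₁ h₁ _ hlam0 hlam1]
    ring
  rw [hstep, abs_mul, abs_of_pos (inv_pos.2 hr0), inv_mul_le_iff₀ hr0] at hθ
  rwa [hr] at hθ

lemma hellingerAffinity_push_le (hPprob : ∀ μ ∈ P, IsProbabilityMeasure μ) (hA : CondA P θ)
    (hconv : ConvexMeasureSet P) (hlin : LinearFunctional P θ) (hε : 0 < ε)
    (hω : 0 < (omegaHQ Q P θ ε).toReal) {P₀ P₁ : Measure X} (h₀ : P₀ ∈ P) (h₁ : P₁ ∈ P) {τ : ℝ}
    (hτ : 1 < τ) (h : τ * (omegaHQ Q P θ ε).toReal ≤ |θ P₀ - θ P₁|) :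
    hellingerAffinity (push Q P₀) (push Q P₁) ≤ 1 - τ * ε ^ 2 / 2 := by
  have := hPprob P₀ h₀
  have := hPprob P₁ h₁
  have hmax := le_of_mul_le_mul_right
    (h.trans (abs_sub_le_max_mul_omegaHQ hPprob hA hconv hlin hε h₀ h₁)) hω
  have hdist := (le_max_iff.1 hmax).resolve_left hτ.not_ge
  rw [le_div_iff₀ (by positivity), dH_sq] at hdist
  linarith

theorem exists_measurableSet_pi_push_le {N : Type*} [Fintype N]
    (hPprob : ∀ μ ∈ P, IsProbabilityMeasure μ) (hA : CondA P θ) (hdom : Dominated P)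
    (hconv : ConvexMeasureSet P) (hlin : LinearFunctional P θ) (hε : 0 < ε)
    (hω : 0 < (omegaHQ Q P θ ε).toReal) {s t τ : ℝ} (hτ : 1 < τ)
    (hst : τ * (omegaHQ Q P θ ε).toReal ≤ t - s) :
    ∃ T : Set (N → Z), MeasurableSet T ∧
      (∀ μ ∈ P, θ μ ≤ s → Measure.pi (fun _ => push Q μ) T ≤
        2 * ENNReal.ofReal (Real.exp (-(τ * ε ^ 2 / 2))) ^ Fintype.card N) ∧
      ∀ μ ∈ P, t ≤ θ μ → Measure.pi (fun _ => push Q μ) Tᶜ ≤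
        2 * ENNReal.ofReal (Real.exp (-(τ * ε ^ 2 / 2))) ^ Fintype.card N := by
  rcases P.eq_empty_or_nonempty with rfl | hne
  · exact ⟨∅, .empty, by simp, by simp⟩
  obtain ⟨ν, _, hν⟩ := hdom.exists_push_absolutelyContinuous hPprob hne Q
  have hprob (S : Set ℝ) :
      ∀ η ∈ push Q '' {μ | μ ∈ P ∧ θ μ ∈ S}, IsProbabilityMeasure η := by
    rintro _ ⟨μ, ⟨hμ, -⟩, rfl⟩
    have := hPprob μ hμ
    infer_instance
  have hac (S : Set ℝ) : ∀ η ∈ push Q '' {μ | μ ∈ P ∧ θ μ ∈ S}, η ≪ ν := by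
    rintro _ ⟨μ, ⟨hμ, -⟩, rfl⟩
    exact hν μ hμ
  have haffinity : ∀ μ ∈ push Q '' {μ | μ ∈ P ∧ θ μ ∈ Set.Iic s},
      ∀ η ∈ push Q '' {μ | μ ∈ P ∧ θ μ ∈ Set.Ici t},
        hellingerAffinity μ η ≤ 1 - τ * ε ^ 2 / 2 := by
    rintro _ ⟨μ, ⟨hμ, hμs⟩, rfl⟩ _ ⟨η, ⟨hη, hηt⟩, rfl⟩
    refine hellingerAffinity_push_le hPprob hA hconv hlin hε hω hμ hη hτ (hst.trans ?_)
    rw [abs_sub_comm]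
    exact (sub_le_sub hηt hμs).trans (le_abs_self _)
  have hexp : 1 - τ * ε ^ 2 / 2 < Real.exp (-(τ * ε ^ 2 / 2)) := by
    have : -(τ * ε ^ 2 / 2) ≠ 0 := neg_ne_zero.2 (by positivity)
    linarith [Real.add_one_lt_exp this]
  obtain ⟨T, hT, hTs, hTt⟩ := exists_measurableSet_pi_le_of_hellingerAffinity_le (N := N)
    (hconv.image_push hlin Q (convex_Iic s)) (hconv.image_push hlin Q (convex_Ici t))
    (hprob _) (hprob _) (hac _) (hac _) haffinity hexp
  exact ⟨T, hT, fun μ hμ hs => hTs _ ⟨μ, ⟨hμ, hs⟩, rfl⟩, fun μ hμ ht => hTt _ ⟨μ, ⟨hμ, ht⟩, rfl⟩⟩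

end Modulus

section Tournament

-- The winner is the index whose most distant loss is as close as possible.
lemma exists_forall_exists_le_of_pos {ι : Type*} [Finite ι] [Nonempty ι] {d : ι → ι → ℕ}
    (hd : ∀ i j, d i j = d j i) {r : ι → ι → Prop} (hr : ∀ i j, 0 < d i j → r i j ∨ r j i) :
    ∃ k, ∀ i, 0 < d i k → ∃ j, r i j ∧ d i k ≤ d i j := by
  classical
  have := Fintype.ofFinite ι
  obtain ⟨k, hk⟩ := Finite.exists_min fun i => {j | r i j}.toFinset.sup (d i)
  refine ⟨k, fun i hik => ?_⟩
  rcases hr i k hik with hr | hr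
  · exact ⟨k, hr, le_rfl⟩
  · have hloss : d i k ≤ {j | r k j}.toFinset.sup (d k) := by
      rw [hd i k]
      exact Finset.le_sup (f := d k) (by simpa using hr)
    obtain ⟨j, hj, hle⟩ := (Finset.le_sup_iff hik).1 (hloss.trans (hk i))
    exact ⟨j, by simpa using hj, hle⟩

lemma exists_measurable_forall_exists_le_of_pos {ι : Type*} [Finite ι] [Nonempty ι]
    [MeasurableSpace ι] {d : ι → ι → ℕ} (hd : ∀ i j, d i j = d j i) {E : ι → ι → Set Ω}
    (hE_meas : ∀ i j, MeasurableSet (E i j)) (hE : ∀ i j, 0 < d i j → E i j ∪ E j i = Set.univ) :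
    ∃ k : Ω → ι, Measurable k ∧
      ∀ z i, 0 < d i (k z) → ∃ j, z ∈ E i j ∧ d i (k z) ≤ d i j := by
  let F : Ω → {r : ι → ι → Prop // ∀ i j, 0 < d i j → r i j ∨ r j i} := fun z =>
    ⟨fun i j => z ∈ E i j, fun i j hij => by
      simpa using Set.eq_univ_iff_forall.1 (hE i j hij) z⟩
  have hF : Measurable F := Measurable.subtype_mk <|
    measurable_pi_lambda _ fun i => measurable_pi_lambda _ fun j => (hE_meas i j).mem
  choose winner hwinner using fun r : {r : ι → ι → Prop // ∀ i j, 0 < d i j → r i j ∨ r j i} =>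
    exists_forall_exists_le_of_pos hd r.2
  exact ⟨fun z => winner (F z), (Measurable.of_discrete (f := winner)).comp hF,
    fun z => hwinner (F z)⟩

lemma lintegral_comp_le_add_sum {ι : Type*} [Fintype ι] (μ : Measure Ω) [IsProbabilityMeasure μ]
    {E : ι → Set Ω} (hE : ∀ j, MeasurableSet (E j)) {D : Ω → ℕ} {d : ι → ℕ} {r : ℕ}
    (hD : ∀ z, r < D z → ∃ j, z ∈ E j ∧ D z ≤ d j) {f : ℕ → ℝ≥0∞} (hf : Monotone f) :
    ∫⁻ z, f (D z) ∂μ ≤ f r + ∑ j with r < d j, f (d j) * μ (E j) := by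
  have hpointwise (z : Ω) :
      f (D z) ≤ f r + ∑ j with r < d j, (E j).indicator (fun _ => f (d j)) z := by
    rcases le_or_gt (D z) r with hz | hz
    · exact (hf hz).trans le_self_add
    · obtain ⟨j, hj, hle⟩ := hD z hz
      calc f (D z) ≤ (E j).indicator (fun _ => f (d j)) z := by
            rw [Set.indicator_of_mem hj]
            exact hf hle
        _ ≤ ∑ j with r < d j, (E j).indicator (fun _ => f (d j)) z :=
            Finset.single_le_sum (f := fun j => (E j).indicator (fun _ => f (d j)) z)
              (fun _ _ => zero_le) (by simpa using hz.trans_le hle)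
        _ ≤ _ := le_add_self
  calc ∫⁻ z, f (D z) ∂μ
      ≤ ∫⁻ z, f r + ∑ j with r < d j, (E j).indicator (fun _ => f (d j)) z ∂μ :=
        lintegral_mono hpointwise
    _ = f r + ∑ j with r < d j, f (d j) * μ (E j) := by
        rw [lintegral_add_left measurable_const, lintegral_const, measure_univ, mul_one,
          lintegral_finsetSum _ fun j _ => measurable_const.indicator (hE j)]
        simp only [lintegral_indicator_const (hE _)]

end Tournament

section Loss

variable {l : ℝ → ℝ} {a : ℝ}

lemma CondB.apply_pow_mul_le (hB : CondB l a) (ha : 0 ≤ a) {t : ℝ} (ht : 0 ≤ t) (j : ℕ) :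
    l ((3 / 2) ^ j * t) ≤ a ^ j * l t := by
  induction j with
  | zero => simp
  | succ j ih =>
    rw [pow_succ', pow_succ', mul_assoc, mul_assoc]
    exact (hB.2.2.2 _ (by positivity)).trans (mul_le_mul_of_nonneg_left ih ha)

lemma natCast_add_quarter_le_three_halves_pow {j : ℕ} (hj : 1 ≤ j) :
    (j : ℝ) + 1 / 4 ≤ (3 / 2) ^ j := by
  induction j, hj using Nat.le_induction with
  | base => norm_num
  | succ j hj ih =>
    rcases hj.eq_or_lt with rfl | hj
    · norm_num
    · have : (2 : ℝ) ≤ j := by exact_mod_cast hj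
      rw [pow_succ]
      push_cast
      linarith

-- `⌈r / 2⌉` applications of the growth condition bring `(r + 1/2) w` below `2 w`.
lemma CondB.apply_add_half_mul_le (hB : CondB l a) (ha : 1 ≤ a) {w : ℝ} (hw : 0 ≤ w) {r : ℕ}
    (hr : 1 ≤ r) : l ((r + 1 / 2) * w) ≤ a * √a ^ (r - 1) * l (2 * w) := by
  have ha0 : 0 ≤ a := zero_le_one.trans ha
  have hl := hB.2.1 (2 * w) (by positivity)
  have hle : (r + 1 / 2) * w ≤ (3 / 2) ^ ((r + 1) / 2) * (2 * w) := by
    have hceil : (r : ℝ) ≤ 2 * ((r + 1) / 2 : ℕ) := by exact_mod_cast (by omega)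
    have := natCast_add_quarter_le_three_halves_pow (j := (r + 1) / 2) (by omega)
    rw [← mul_assoc]
    gcongr
    linarith
  have hpow : a ^ ((r + 1) / 2) ≤ a * √a ^ (r - 1) :=
    calc a ^ ((r + 1) / 2) = √a ^ (2 * ((r + 1) / 2)) := by rw [pow_mul, Real.sq_sqrt ha0]
      _ ≤ √a ^ (2 + (r - 1)) := pow_le_pow_right₀ (Real.one_le_sqrt.2 ha) (by omega)
      _ = a * √a ^ (r - 1) := by rw [pow_add, Real.sq_sqrt ha0]
  calc l ((r + 1 / 2) * w) ≤ l ((3 / 2) ^ ((r + 1) / 2) * (2 * w)) :=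
        hB.1 _ _ (by positivity) hle
    _ ≤ a ^ ((r + 1) / 2) * l (2 * w) := hB.apply_pow_mul_le ha0 (by positivity) _
    _ ≤ _ := by gcongr

lemma sum_half_pow_le_one_of_injOn {ι : Type*} {s : Finset ι} {f : ι → ℕ} (hf : Set.InjOn f s) :
    ∑ i ∈ s, (1 / 2 : ℝ) ^ (f i + 1) ≤ 1 := by
  classical
  rw [← Finset.sum_image (f := fun n => (1 / 2 : ℝ) ^ (n + 1)) hf]
  have hsum : HasSum (fun n : ℕ => (1 / 2 : ℝ) ^ (n + 1)) 1 := by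
    simpa [pow_succ] using hasSum_geometric_two.mul_right (1 / 2 : ℝ)
  exact sum_le_hasSum _ (fun n _ => by positivity) hsum

lemma sum_half_pow_dist_le_two {ι : Type*} (s : Finset ι) {f : ι → ℕ} (hf : Set.InjOn f s)
    (k : ℕ) : ∑ i ∈ s with 1 < k.dist (f i), (1 / 2 : ℝ) ^ (k.dist (f i) - 1) ≤ 2 := by
  have hside (t : Finset ι) (ht : ∀ i ∈ t, i ∈ s ∧ 1 < k.dist (f i))
      (hinj : Set.InjOn (fun i => k.dist (f i) - 2) t) :
      ∑ i ∈ t, (1 / 2 : ℝ) ^ (k.dist (f i) - 1) ≤ 1 := by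
    refine le_trans (Finset.sum_le_sum fun i hi => ?_) (sum_half_pow_le_one_of_injOn hinj)
    rw [show k.dist (f i) - 1 = k.dist (f i) - 2 + 1 by have := ht i hi; omega]
  rw [← Finset.sum_filter_add_sum_filter_not _ fun i => k < f i]
  refine (add_le_add (hside _ (by simp +contextual) ?_) (hside _ (by simp +contextual) ?_)).trans
    one_add_one_eq_two.le <;>
  · intro i hi j hj hij
    simp only [Finset.mem_coe, Finset.mem_filter] at hi hj
    simp only [Nat.dist] at hi hj hij
    exact hf hi.1.1 hj.1.1 (by omega)

end Loss

section Estimation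

/-- The family `M` admits tests about the parameter `θ` at every resolution `r * W`: the hypotheses
`θ ≤ s` and `θ ≥ s + r * W` can be told apart, uniformly in the family, with both error
probabilities at most `2 * δ ^ r`. -/
def HasGeometricTests {α : Type*} (M : α → Measure Ω) (θ : α → ℝ) (W : ℝ) (δ : ℝ≥0∞) : Prop :=
  ∀ (r : ℕ) (s : ℝ), 1 ≤ r → ∃ T : Set Ω, MeasurableSet T ∧
    (∀ x, θ x ≤ s → M x T ≤ 2 * δ ^ r) ∧ ∀ x, s + r * W ≤ θ x → M x Tᶜ ≤ 2 * δ ^ r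

variable {l : ℝ → ℝ} {a W : ℝ}

lemma HasGeometricTests.mono {α : Type*} {M : α → Measure Ω} {θ : α → ℝ} {δ δ' : ℝ≥0∞}
    (h : HasGeometricTests M θ W δ) (hδ : δ ≤ δ') : HasGeometricTests M θ W δ' := by
  intro r s hr
  obtain ⟨T, hT, hTs, hTt⟩ := h r s hr
  have hpow : 2 * δ ^ r ≤ 2 * δ' ^ r := by gcongr
  exact ⟨T, hT, fun x hx => (hTs x hx).trans hpow, fun x hx => (hTt x hx).trans hpow⟩

-- `E k m` is the event that the test between the cells of index `k` and `m` decides for `m`.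
lemma HasGeometricTests.exists_events {α : Type*} {M : α → Measure Ω}
    [∀ x, IsProbabilityMeasure (M x)] {θ : α → ℝ} {δ : ℝ≥0∞} (h : HasGeometricTests M θ W δ)
    (b : ℝ) : ∃ E : ℕ → ℕ → Set Ω, (∀ k m, MeasurableSet (E k m)) ∧
      (∀ k m, 0 < k.dist m → E k m ∪ E m k = Set.univ) ∧
      ∀ (k m : ℕ) x, θ x ∈ Set.Icc (b + k * W) (b + (k + 1) * W) →
        M x (E k m) ≤ 2 * δ ^ (k.dist m - 1) := by
  have htest (r : ℕ) (s : ℝ) : ∃ T : Set Ω, MeasurableSet T ∧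
      (∀ x, θ x ≤ s → M x T ≤ 2 * δ ^ r) ∧ ∀ x, s + r * W ≤ θ x → M x Tᶜ ≤ 2 * δ ^ r := by
    rcases r.eq_zero_or_pos with rfl | hr
    · exact ⟨∅, .empty, by simp, by simp⟩
    · exact h r s hr
  choose T hT_meas hT_le hT_ge using htest
  refine ⟨fun k m => if k < m then T (m - k - 1) (b + (k + 1) * W)
    else (T (k - m - 1) (b + (m + 1) * W))ᶜ, fun k m => ?_, fun k m hkm => ?_, fun k m x hx => ?_⟩
  · dsimp only
    split_ifs
    exacts [hT_meas _ _, (hT_meas _ _).compl]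
  · have hne : k ≠ m := by
      rintro rfl
      simp at hkm
    rcases hne.lt_or_gt with hlt | hlt <;>
      simp [hlt, hlt.not_gt, Set.union_compl_self, Set.compl_union_self]
  · dsimp only
    split_ifs with hlt
    · rw [Nat.dist_eq_sub_of_le hlt.le]
      exact hT_le _ _ x hx.2
    · rw [Nat.dist_eq_sub_of_le_right (not_lt.1 hlt)]
      rcases (not_lt.1 hlt).eq_or_lt with rfl | hlt
      · simpa using prob_le_one.trans one_le_two
      refine hT_ge _ _ x (le_of_eq_of_le ?_ hx.1)
      rw [Nat.sub_sub, Nat.cast_sub hlt]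
      push_cast
      ring

lemma exists_fin_mem_Icc_add_mul (hW : 0 < W) {b t L : ℝ} (hbt : b ≤ t) (htL : t ≤ b + L) :
    ∃ k : Fin (⌊L / W⌋₊ + 1), t ∈ Set.Icc (b + k * W) (b + (k + 1) * W) := by
  have hfloor : ⌊(t - b) / W⌋₊ ≤ ⌊L / W⌋₊ := by
    gcongr
    linarith
  refine ⟨⟨⌊(t - b) / W⌋₊, Nat.lt_succ_of_le hfloor⟩, ?_, ?_⟩
  · have := Nat.floor_le (div_nonneg (sub_nonneg.2 hbt) hW.le)
    rw [le_div_iff₀ hW] at this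
    linarith
  · have := (Nat.lt_floor_add_one ((t - b) / W)).le
    rw [div_le_iff₀ hW] at this
    linarith

lemma abs_add_mul_sub_le_of_mem_Icc (hW : 0 ≤ W) {b t : ℝ} {k : ℕ}
    (ht : t ∈ Set.Icc (b + k * W) (b + (k + 1) * W)) (m : ℕ) :
    |b + (m + 1 / 2) * W - t| ≤ (k.dist m + 1 / 2) * W := by
  have hdist : |(m : ℝ) - k| = k.dist m := by
    rcases le_total k m with hkm | hkm
    · rw [Nat.dist_eq_sub_of_le hkm, Nat.cast_sub hkm, abs_of_nonneg (by simpa using hkm)]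
    · rw [Nat.dist_eq_sub_of_le_right hkm, Nat.cast_sub hkm, abs_sub_comm,
        abs_of_nonneg (by simpa using hkm)]
  have hcenter : |b + (k + 1 / 2) * W - t| ≤ 1 / 2 * W :=
    abs_le.2 ⟨by linarith [ht.2], by linarith [ht.1]⟩
  calc |b + (m + 1 / 2) * W - t| = |(m - k) * W + (b + (k + 1 / 2) * W - t)| := by
        congr 1
        ring
    _ ≤ |(m - k) * W| + |b + (k + 1 / 2) * W - t| := abs_add_le _ _
    _ ≤ (k.dist m + 1 / 2) * W := by
        rw [abs_mul, hdist, abs_of_nonneg hW]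
        linarith

lemma CondB.ofReal_apply_mul_le (hB : CondB l a) (ha : 1 ≤ a) (hW : 0 ≤ W) {r : ℕ} (hr : 1 ≤ r) :
    ENNReal.ofReal (l ((r + 1 / 2) * W)) * (2 * ENNReal.ofReal (1 / (2 * √a)) ^ (r - 1)) ≤
      ENNReal.ofReal (2 * a * l (2 * W) * (1 / 2) ^ (r - 1)) := by
  have hl := hB.2.1 (2 * W) (by positivity)
  have ha0 : 0 < a := one_pos.trans_le ha
  have hcancel : √a * (1 / (2 * √a)) = 1 / 2 := by
    have : √a ≠ 0 := (Real.sqrt_pos.2 ha0).ne'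
    field_simp
  calc _ ≤ ENNReal.ofReal (a * √a ^ (r - 1) * l (2 * W)) *
        (2 * ENNReal.ofReal (1 / (2 * √a)) ^ (r - 1)) := by
        gcongr
        exact hB.apply_add_half_mul_le ha hW hr
    _ = ENNReal.ofReal (2 * a * l (2 * W) * (√a * (1 / (2 * √a))) ^ (r - 1)) := by
        rw [← ENNReal.ofReal_pow (by positivity), ← ENNReal.ofReal_ofNat 2,
          ← ENNReal.ofReal_mul (by positivity), ← ENNReal.ofReal_mul (by positivity)]
        congr 1
        ring
    _ = _ := by rw [hcancel]

lemma lintegral_ofReal_loss_le (hB : CondB l a) (ha : 1 ≤ a) (hW : 0 ≤ W) (μ : Measure Ω)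
    [IsProbabilityMeasure μ] {ι : Type*} [Finite ι] {E : ι → Set Ω} (hE : ∀ i, MeasurableSet (E i))
    {f : ι → ℕ} (hf : f.Injective) {k : ℕ}
    (hμE : ∀ i, μ (E i) ≤ 2 * ENNReal.ofReal (1 / (2 * √a)) ^ (k.dist (f i) - 1)) {D : Ω → ℕ}
    (hD : ∀ z, 1 < D z → ∃ i, z ∈ E i ∧ D z ≤ k.dist (f i)) :
    ∫⁻ z, ENNReal.ofReal (l ((D z + 1 / 2) * W)) ∂μ ≤
      ENNReal.ofReal ((1 + 4 * a) * l (2 * W)) := by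
  have := Fintype.ofFinite ι
  have hl := hB.2.1 (2 * W) (by positivity)
  have ha0 : 0 < a := one_pos.trans_le ha
  have hmono : Monotone fun r : ℕ => ENNReal.ofReal (l ((r + 1 / 2) * W)) := fun r s hrs =>
    ENNReal.ofReal_le_ofReal (hB.1 _ _ (by positivity) (by gcongr))
  have hone : l ((1 + 1 / 2) * W) ≤ l (2 * W) := by
    refine hB.1 _ _ (by positivity) ?_
    gcongr
    norm_num
  have hsum := sum_half_pow_dist_le_two Finset.univ hf.injOn k
  calc _ ≤ ENNReal.ofReal (l ((1 + 1 / 2) * W)) + ∑ i with 1 < k.dist (f i),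
        ENNReal.ofReal (l ((k.dist (f i) + 1 / 2) * W)) * μ (E i) := by
        simpa using lintegral_comp_le_add_sum μ hE hD hmono
    _ ≤ ENNReal.ofReal (l (2 * W)) + ∑ i with 1 < k.dist (f i),
        ENNReal.ofReal (2 * a * l (2 * W) * (1 / 2) ^ (k.dist (f i) - 1)) := by
        gcongr with i hi
        exact (mul_le_mul_right (hμE i) _).trans
          (hB.ofReal_apply_mul_le ha hW (Finset.mem_filter.1 hi).2.le)
    _ = ENNReal.ofReal (l (2 * W) + 2 * a * l (2 * W) *
          ∑ i with 1 < k.dist (f i), (1 / 2) ^ (k.dist (f i) - 1)) := by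
        rw [← ENNReal.ofReal_sum_of_nonneg fun _ _ => by positivity,
          ← ENNReal.ofReal_add hl (Finset.sum_nonneg fun _ _ => by positivity), Finset.mul_sum]
    _ ≤ _ := by
        refine ENNReal.ofReal_le_ofReal ?_
        nlinarith [mul_nonneg ha0.le hl]

theorem HasGeometricTests.exists_estimator {α : Type*} {M : α → Measure Ω}
    [∀ x, IsProbabilityMeasure (M x)] {θ : α → ℝ}
    (h : HasGeometricTests M θ W (ENNReal.ofReal (1 / (2 * √a)))) (hW : 0 < W) {c : ℝ}
    (hθ : ∀ x, |θ x| ≤ c) (hB : CondB l a) (ha : 1 ≤ a) :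
    ∃ est : Ω → ℝ, Measurable est ∧ ∀ x, ∫⁻ z, ENNReal.ofReal (l |est z - θ x|) ∂(M x) ≤
      ENNReal.ofReal ((1 + 4 * a) * l (2 * W)) := by
  obtain ⟨E, hE_meas, hE_union, hE_le⟩ := h.exists_events (-c)
  obtain ⟨cell, hcell, hwin⟩ := exists_measurable_forall_exists_le_of_pos
    (ι := Fin (⌊2 * c / W⌋₊ + 1)) (d := fun k m => (k : ℕ).dist m)
    (fun k m => Nat.dist_comm k m) (fun k m => hE_meas k m) fun k m => hE_union k m
  have hcell_cast : Measurable fun z => ((cell z : ℕ) : ℝ) :=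
    (Measurable.of_discrete (f := fun k : Fin (⌊2 * c / W⌋₊ + 1) => ((k : ℕ) : ℝ))).comp hcell
  refine ⟨fun z => -c + (cell z + 1 / 2) * W, by fun_prop, fun x => ?_⟩
  obtain ⟨k, hk⟩ := exists_fin_mem_Icc_add_mul hW (abs_le.1 (hθ x)).1
    (by linarith [(abs_le.1 (hθ x)).2] : θ x ≤ -c + 2 * c)
  calc _ ≤ ∫⁻ z, ENNReal.ofReal (l (((k : ℕ).dist (cell z) + 1 / 2) * W)) ∂(M x) :=
        lintegral_mono fun z => ENNReal.ofReal_le_ofReal <|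
          hB.1 _ _ (abs_nonneg _) (abs_add_mul_sub_le_of_mem_Icc hW.le hk _)
    _ ≤ _ := lintegral_ofReal_loss_le hB ha hW.le (M x)
        (E := fun m : Fin (⌊2 * c / W⌋₊ + 1) => E k m) (fun m => hE_meas k m) Fin.val_injective
        (fun m => hE_le k m x hk) fun z hz => hwin z k (one_pos.trans hz)

end Estimation

section UpperBound

variable {P : Set (Measure X)} {θ : Measure X → ℝ} {Q : Kernel X Z} [IsMarkovKernel Q]
  {N : Type*} [Fintype N] {l : ℝ → ℝ} {a : ℝ}

theorem hasGeometricTests_pi_push (hPprob : ∀ μ ∈ P, IsProbabilityMeasure μ) (hA : CondA P θ)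
    (hdom : Dominated P) (hconv : ConvexMeasureSet P) (hlin : LinearFunctional P θ) {ε κ : ℝ}
    (hε : 0 < ε) (hω : 0 < (omegaHQ Q P θ ε).toReal) (hκ : 2 < κ) :
    HasGeometricTests (fun μ : P => Measure.pi fun _ : N => push Q μ.1) (fun μ => θ μ.1)
      (κ / 2 * (omegaHQ Q P θ ε).toReal)
      (ENNReal.ofReal (Real.exp (-(κ / 4 * (Fintype.card N * ε ^ 2))))) := by
  intro r s hr
  have hr' : (1 : ℝ) ≤ r := by exact_mod_cast hr
  obtain ⟨T, hT, hTs, hTt⟩ := exists_measurableSet_pi_push_le (N := N) (Q := Q) (s := s)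
    (t := s + r * (κ / 2 * (omegaHQ Q P θ ε).toReal)) (τ := r * (κ / 2)) hPprob hA hdom hconv hlin
    hε hω (by nlinarith) (by linarith)
  have hexp : Real.exp (-(r * (κ / 2) * ε ^ 2 / 2)) ^ Fintype.card N =
      Real.exp (-(κ / 4 * (Fintype.card N * ε ^ 2))) ^ r := by
    rw [← Real.exp_nat_mul, ← Real.exp_nat_mul]
    ring_nf
  rw [← ENNReal.ofReal_pow (by positivity), hexp, ENNReal.ofReal_pow (by positivity)] at hTs hTt
  exact ⟨T, hT, fun μ => hTs μ.1 μ.2, fun μ => hTt μ.1 μ.2⟩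

lemma exp_neg_div_four_le_of_two_mul_log_le {κ : ℝ} (ha : 0 < a)
    (hκ : 2 * Real.log (4 * a) ≤ κ) : Real.exp (-(κ / 4)) ≤ 1 / (2 * √a) := by
  rw [one_div, Real.exp_neg]
  refine inv_anti₀ (by positivity) ?_
  rw [← Real.log_le_iff_le_exp (by positivity), Real.log_mul two_ne_zero (by positivity),
    Real.log_sqrt ha.le]
  rw [Real.log_mul four_ne_zero ha.ne', show (4 : ℝ) = 2 ^ 2 by norm_num, Real.log_pow] at hκ
  push_cast at hκ
  linarith

theorem exists_estimator_lintegral_loss_le [Nonempty N]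
    (hPprob : ∀ μ ∈ P, IsProbabilityMeasure μ) (hA : CondA P θ) (hdom : Dominated P)
    (hconv : ConvexMeasureSet P) (hlin : LinearFunctional P θ) (ha : 1 ≤ a) (hB : CondB l a)
    {κ : ℝ} (hκ : 2 * Real.log (4 * a) ≤ κ) :
    ∃ est : (N → Z) → ℝ, Measurable est ∧ ∀ μ ∈ P,
      ∫⁻ z, ENNReal.ofReal (l |est z - θ μ|) ∂(Measure.pi fun _ : N => push Q μ) ≤
        ENNReal.ofReal
          ((1 + 4 * a) * l (κ * (omegaHQ Q P θ (√(Fintype.card N))⁻¹).toReal)) := by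
  have hε : 0 < (√(Fintype.card N : ℝ))⁻¹ := by positivity
  obtain hω | hω := (ENNReal.toReal_nonneg
    (a := omegaHQ Q P θ (√(Fintype.card N))⁻¹)).eq_or_lt
  · obtain rfl | ⟨μ₀, hμ₀⟩ := P.eq_empty_or_nonempty
    · exact ⟨0, measurable_const, by simp⟩
    have hθ (μ) (hμ : μ ∈ P) : |θ μ₀ - θ μ| = 0 := by
      refine le_antisymm ?_ (abs_nonneg _)
      simpa only [← hω, mul_zero] using
        abs_sub_le_max_mul_omegaHQ (Q := Q) hPprob hA hconv hlin hε hμ₀ hμ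
    exact ⟨fun _ => θ μ₀, measurable_const, fun μ hμ => by simp [hθ μ hμ, hB.2.2.1]⟩
  have hκ2 : 2 < κ := by
    have : Real.log 4 ≤ Real.log (4 * a) := Real.log_le_log four_pos (by linarith)
    have : Real.log 4 = 2 * Real.log 2 := by
      rw [show (4 : ℝ) = 2 ^ 2 by norm_num, Real.log_pow, Nat.cast_two]
    linarith [Real.log_two_gt_d9]
  have htests := hasGeometricTests_pi_push (N := N) hPprob hA hdom hconv hlin hε hω hκ2
  rw [inv_pow, Real.sq_sqrt (Nat.cast_nonneg _),
    mul_inv_cancel₀ (Nat.cast_ne_zero.2 Fintype.card_ne_zero), mul_one] at htests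
  obtain ⟨c, hc⟩ := hA
  have (μ : P) : IsProbabilityMeasure μ.1 := hPprob μ.1 μ.2
  obtain ⟨est, hest, hrisk⟩ := (htests.mono (ENNReal.ofReal_le_ofReal
    (exp_neg_div_four_le_of_two_mul_log_le (one_pos.trans_le ha) hκ))).exists_estimator
      (by positivity) (fun μ => hc μ.1 μ.2) hB ha
  refine ⟨est, hest, fun μ hμ => (hrisk ⟨μ, hμ⟩).trans_eq ?_⟩
  ring_nf

lemma two_mul_log_four_mul_le_sq (ha : 1 ≤ a) {C : ℝ}
    (hC : √(2 * Real.log (2 * a)) + 1 ≤ C) : 2 * Real.log (4 * a) ≤ C ^ 2 := by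
  have hlog : 2 * Real.log 2 ≤ 2 * Real.log (2 * a) := by
    gcongr
    linarith
  have hsqrt : 1 ≤ √(2 * Real.log (2 * a)) := by
    rw [Real.one_le_sqrt]
    linarith [Real.log_two_gt_d9]
  calc 2 * Real.log (4 * a) = 2 * Real.log (2 * a) + 2 * Real.log 2 := by
        rw [show 4 * a = 2 * a * 2 by ring, Real.log_mul (by positivity) two_ne_zero]
        ring
    _ ≤ √(2 * Real.log (2 * a)) ^ 2 + 2 * √(2 * Real.log (2 * a)) + 1 := by
        rw [Real.sq_sqrt (by linarith [Real.log_two_gt_d9])]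
        linarith [Real.log_two_lt_d9]
    _ = (√(2 * Real.log (2 * a)) + 1) ^ 2 := by ring
    _ ≤ C ^ 2 := by gcongr

lemma CondB.apply_sq_mul_le (hB : CondB l a) (ha : 0 ≤ a) {t : ℝ} (ht : 0 ≤ t) {C : ℝ}
    (hC : 1 ≤ C) :
    l (C ^ 2 * t) ≤ a ^ ⌈2 * Real.log C / Real.log (3 / 2)⌉ * l t := by
  have hlog : 0 < Real.log (3 / 2) := Real.log_pos (by norm_num)
  obtain ⟨j, hj⟩ := Int.eq_ofNat_of_zero_le
    (Int.ceil_nonneg (div_nonneg (mul_nonneg two_pos.le (Real.log_nonneg hC)) hlog.le))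
  have hle := Int.le_ceil (2 * Real.log C / Real.log (3 / 2))
  rw [hj, Int.cast_natCast, div_le_iff₀ hlog] at hle
  have hpow : C ^ 2 ≤ (3 / 2 : ℝ) ^ j := by
    rw [← Real.log_le_log_iff (by positivity) (by positivity), Real.log_pow, Real.log_pow]
    exact_mod_cast hle
  rw [hj, zpow_natCast]
  exact (hB.1 _ _ (by positivity) (by gcongr)).trans (hB.apply_pow_mul_le ha ht j)

lemma one_add_four_mul_le (ha : 1 / 2 < a) : 1 + 4 * a ≤ 1 + 8 * a ^ 2 / (2 * a - 1) := by
  gcongr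
  rw [le_div_iff₀ (by linarith)]
  nlinarith

end UpperBound

/-- attainability: upper bound for a given non-interactive channel.
Under boundedness of `θ` (Condition A), the loss condition (Condition B with constant `a`),
`𝒫` dominated and convex, `θ` linear, and `Q` a non-interactive channel with identical
Markov marginals `Q1` (so that `Q P^{⊗n} = (Q1 P)^{⊗n}`), for every
`C ≥ √(2 log 2a) + 1` and `C1 = (1 + 8a²/(2a-1)) a^{⌈2 log C / log(3/2)⌉}`, there exists an
estimator `θ̂_n : Z^n → ℝ` with
`sup_{P ∈ 𝒫} E_{Q P^{⊗n}} l(|θ̂_n - θ(P)|) ≤ C1 · l(ω_H^{(Q1)}(n^{-1/2}))`. -/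
theorem statement6 {X Z : Type*} [MeasurableSpace X] [MeasurableSpace Z]
    (n : ℕ) (hn : 0 < n) (P : Set (Measure X)) (hPprob : ∀ μ ∈ P, IsProbabilityMeasure μ)
    (θ : Measure X → ℝ) (hA : CondA P θ)
    (l : ℝ → ℝ) (a : ℝ) (ha : 1 < a) (hB : CondB l a)
    (hdom : Dominated P) (hconv : ConvexMeasureSet P) (hlin : LinearFunctional P θ)
    (Q1 : Kernel X Z) (hQ1 : IsMarkovKernel Q1)
    (C : ℝ) (hC : Real.sqrt (2 * Real.log (2 * a)) + 1 ≤ C) :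
    ∃ est : (Fin n → Z) → ℝ, Measurable est ∧
      ∀ μ ∈ P,
        (∫⁻ z, ENNReal.ofReal (l |est z - θ μ|)
            ∂(Measure.pi fun _ : Fin n => push (fun x => Q1 x) μ))
          ≤ ENNReal.ofReal
              (((1 + 8 * a ^ 2 / (2 * a - 1)) *
                  a ^ ⌈2 * Real.log C / Real.log (3 / 2)⌉) *
                l ((omegaHQ (fun x => Q1 x) P θ ((Real.sqrt ↑n)⁻¹)).toReal)) := by
  have : Nonempty (Fin n) := ⟨⟨0, hn⟩⟩
  have hC1 : 1 ≤ C := (le_add_of_nonneg_left (Real.sqrt_nonneg _)).trans hC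
  obtain ⟨est, hest, hrisk⟩ := exists_estimator_lintegral_loss_le (N := Fin n) (Q := Q1)
    hPprob hA hdom hconv hlin ha.le hB (two_mul_log_four_mul_le_sq ha.le hC)
  rw [Fintype.card_fin] at hrisk
  have hω : 0 ≤ (omegaHQ Q1 P θ (√n)⁻¹).toReal := ENNReal.toReal_nonneg
  refine ⟨est, hest, fun μ hμ => (hrisk μ hμ).trans (ENNReal.ofReal_le_ofReal ?_)⟩
  rw [mul_assoc (1 + 8 * a ^ 2 / (2 * a - 1))]
  have hl := hB.2.1 _ (mul_nonneg (sq_nonneg C) hω)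
  exact mul_le_mul (one_add_four_mul_le (by linarith))
    (hB.apply_sq_mul_le (one_pos.trans ha).le hω hC1) hl
    ((by positivity : 0 ≤ 1 + 4 * a).trans (one_add_four_mul_le (by linarith)))

end PrivacyPaper
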